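/- arXiv:1309.3444 — 3 statements merged into one kernel-verified Lean document; each statement's English description precedes it below -/
import Mathlib

section
/- There are positive constants a₃ and κ₃, independent of R and V, such that for every positive integer R and every subset V of ℤ² containing (0,0) and (R,0), the simple random walk on the comb started at the origin satisfies P_0( H({(R,0)}) < H(Vᶜ) ) ≤ exp( a₃ − κ₃·√(R³/|V|) ). -/
open MeasureTheory ENNReal
open scoped Pointwise

/-- Adjacency in the comb lattice `𝒞`. -/
def combAdj (z w : ℤ × ℤ) : Prop :=
  (z.1 = w.1 ∧ |z.2 - w.2| = 1) ∨ (z.2 = 0 ∧ w.2 = 0 ∧ |z.1 - w.1| = 1)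

/-- Degree of a vertex in the comb. -/
def combDeg (z : ℤ × ℤ) : ℕ := if z.2 = 0 then 4 else 2

open Classical in
/-- One-step transition probability of the simple random walk on the comb. -/
noncomputable def stepProb (z w : ℤ × ℤ) : ℝ≥0∞ :=
  if combAdj z w then ((combDeg z : ℝ≥0∞))⁻¹ else 0

/-- Probability that the walk started at `v` follows the given finite path. -/
noncomputable def pathProb (v : ℤ × ℤ) {n : ℕ} (path : Fin (n + 1) → ℤ × ℤ) : ℝ≥0∞ :=
  (if path 0 = v then 1 else 0) * ∏ i : Fin n, stepProb (path i.castSucc) (path i.succ)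

/-- `S` is a simple random walk on the comb started at `v`, under the probability
measure `P` (characterized by its finite-dimensional distributions). -/
def IsCombWalk {Ω : Type*} [MeasurableSpace Ω] (P : Measure Ω)
    (S : ℕ → Ω → ℤ × ℤ) (v : ℤ × ℤ) : Prop :=
  IsProbabilityMeasure P ∧ (∀ t, Measurable (S t)) ∧
    ∀ (n : ℕ) (path : Fin (n + 1) → ℤ × ℤ),
      P {ω | ∀ i : Fin (n + 1), S i ω = path i} = pathProb v path

/-- `W i`, `i : ℕ`, are i.i.d. simple random walks on the comb started at the origin. -/
def IsIIDCombWalks {Ω : Type*} [MeasurableSpace Ω] (P : Measure Ω)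
    (W : ℕ → ℕ → Ω → ℤ × ℤ) : Prop :=
  IsProbabilityMeasure P ∧ (∀ i t, Measurable (W i t)) ∧
    ∀ (k n : ℕ) (path : Fin k → Fin (n + 1) → ℤ × ℤ),
      P {ω | ∀ i : Fin k, ∀ t : Fin (n + 1), W i t ω = path i t} =
        ∏ i : Fin k, pathProb (0, 0) (path i)

/-- The domain `𝒟(ρ) = D(ρ) ∩ ℤ²`. -/
def combD (ρ : ℝ) : Set (ℤ × ℤ) :=
  {z | |(z.1 : ℝ)| < ρ ∧ |(z.2 : ℝ)| < (ρ - |(z.1 : ℝ)|) ^ 2 / 3}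

/-- The boundary `∂𝒟(ρ)`: sites outside `𝒟(ρ)` at graph distance 1 from `𝒟(ρ)`. -/
def combBoundary (ρ : ℝ) : Set (ℤ × ℤ) :=
  {z | z ∉ combD ρ ∧ ∃ w ∈ combD ρ, combAdj w z}

/-- Hitting time of a set by a trajectory (`⊤` if the set is never hit). -/
noncomputable def hitTime (Λ : Set (ℤ × ℤ)) (traj : ℕ → ℤ × ℤ) : ℕ∞ :=
  ⨅ (m : ℕ) (_ : traj m ∈ Λ), (m : ℕ∞)

/-- The trajectory exits `D` for the first time at the site `z`. -/
def exitsAt (D : Set (ℤ × ℤ)) (z : ℤ × ℤ) (traj : ℕ → ℤ × ℤ) : Prop :=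
  ∃ n : ℕ, (∀ m < n, traj m ∈ D) ∧ traj n ∉ D ∧ traj n = z

/-- Green's function of the walk `S` killed upon exiting `Λ`:
expected number of visits to `y` strictly before the exit time. -/
noncomputable def greenFn {Ω : Type*} [MeasurableSpace Ω] (P : Measure Ω)
    (S : ℕ → Ω → ℤ × ℤ) (Λ : Set (ℤ × ℤ)) (y : ℤ × ℤ) : ℝ≥0∞ :=
  ∑' n : ℕ, P {ω | (∀ m ≤ n, S m ω ∈ Λ) ∧ S n ω = y}

/-- The parent `𝒜(z)` of a vertex of the comb: its unique neighbor closer to the origin. -/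
def parent (z : ℤ × ℤ) : ℤ × ℤ :=
  if z.2 = 0 then (z.1 - Int.sign z.1, 0) else (z.1, z.2 - Int.sign z.2)

/-- First site outside `A` visited by the trajectory: the settlement site of an explorer. -/
noncomputable def settlePoint (A : Set (ℤ × ℤ)) (traj : ℕ → ℤ × ℤ) : ℤ × ℤ :=
  traj (sInf {n | traj n ∉ A})

/-- The internal DLA cluster after `k` explorers with trajectories `W 0, …, W (k-1)`. -/
noncomputable def dlaCluster (W : ℕ → ℕ → ℤ × ℤ) : ℕ → Set (ℤ × ℤ)
  | 0 => ∅
  | k + 1 => dlaCluster W k ∪ {settlePoint (dlaCluster W k) (W k)}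

open Classical in
/-- Toppling at `x` for the divisible sandpile: the mass exceeding 1 at `x`
is distributed equally among the neighbors of `x` in the comb. -/
noncomputable def topple (x : ℤ × ℤ) (μ : ℤ × ℤ → ℝ) : ℤ × ℤ → ℝ := fun z =>
  if μ x ≤ 1 then μ z
  else if z = x then 1
  else if combAdj x z then μ z + (μ x - 1) / (combDeg x : ℝ)
  else μ z

/-- Mass distribution of the divisible sandpile started with mass `mass` at the
origin, after `k` topplings along the sequence `seq`. -/
noncomputable def sandMass (seq : ℕ → ℤ × ℤ) (mass : ℝ) : ℕ → ℤ × ℤ → ℝ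
  | 0 => fun z => if z = (0, 0) then mass else 0
  | k + 1 => topple (seq k) (sandMass seq mass k)

/-- The odometer of the divisible sandpile: total mass emitted from `z`. -/
noncomputable def odometer (seq : ℕ → ℤ × ℤ) (mass : ℝ) (z : ℤ × ℤ) : ℝ :=
  ∑' k : ℕ, if seq k = z then max (sandMass seq mass k z - 1) 0 else 0

/-- The divisible sandpile cluster: sites which emitted positive mass. -/
def sandCluster (seq : ℕ → ℤ × ℤ) (mass : ℝ) : Set (ℤ × ℤ) :=
  {z | 0 < odometer seq mass z}

/-- Euclidean ball `𝔹(R)` of radius `R` in `ℤ²`. -/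
def ballZ (R : ℝ) : Set (ℤ × ℤ) :=
  {z | Real.sqrt ((z.1 : ℝ) ^ 2 + (z.2 : ℝ) ^ 2) < R}

/-- Smallest integer `≥ (ρ - x)²/3`. -/
noncomputable def Lrho (ρ : ℝ) (x : ℤ) : ℕ := ⌈(ρ - (x : ℝ)) ^ 2 / 3⌉₊

/-- Smallest integer `≥ (ρ - |x|)²/3`. -/
noncomputable def LrhoAbs (ρ : ℝ) (x : ℤ) : ℕ := ⌈(ρ - |(x : ℝ)|) ^ 2 / 3⌉₊

def goodP (V : Set (ℤ × ℤ)) (r : ℤ × ℤ) (n : ℕ) (p : Fin (n + 1) → ℤ × ℤ) : Prop :=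
  (∀ i : Fin n, p i.castSucc ∈ V ∧ p i.castSucc ≠ r) ∧ p (Fin.last n) = r

open Classical in
noncomputable def TT (V : Set (ℤ × ℤ)) (r : ℤ × ℤ) (n : ℕ) (z : ℤ × ℤ) : ℝ≥0∞ :=
  ∑' p : Fin (n + 1) → ℤ × ℤ, if goodP V r n p then pathProb z p else 0

lemma goodP_cons (V : Set (ℤ × ℤ)) (r : ℤ × ℤ) (n : ℕ) (a : ℤ × ℤ) (p : Fin (n + 1) → ℤ × ℤ) :
    goodP V r (n + 1) (Fin.cons a p : Fin (n + 2) → ℤ × ℤ) ↔ (a ∈ V ∧ a ≠ r) ∧ goodP V r n p := by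
  unfold goodP
  rw [Fin.forall_fin_succ, ← Fin.succ_last, Fin.cons_succ]
  simp only [Fin.castSucc_zero, Fin.cons_zero, ← Fin.succ_castSucc, Fin.cons_succ, and_assoc]

lemma pathProb_cons (n : ℕ) (z a : ℤ × ℤ) (p : Fin (n + 1) → ℤ × ℤ) :
    pathProb z (Fin.cons a p : Fin (n + 2) → ℤ × ℤ) =
      if a = z then ∑' w, stepProb z w * pathProb w p else 0 := by
  have h : ∑' w, stepProb z w * pathProb w p = stepProb z (p 0) * pathProb (p 0) p := by
    apply tsum_eq_single
    intro w hw
    simp [pathProb, hw.symm]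
  rw [h]
  unfold pathProb
  rw [Fin.prod_univ_succ]
  simp only [Fin.castSucc_zero, Fin.cons_zero, ← Fin.succ_castSucc, Fin.cons_succ]
  split_ifs with h1 <;> simp [h1]

lemma tsum_cons_path (n : ℕ) (F : (Fin (n + 2) → ℤ × ℤ) → ℝ≥0∞) :
    ∑' p, F p = ∑' a : ℤ × ℤ, ∑' p : Fin (n + 1) → ℤ × ℤ, F (Fin.cons a p) := by
  rw [← (Fin.consEquiv (fun _ : Fin (n + 2) => ℤ × ℤ)).tsum_eq]
  exact ENNReal.tsum_prod (f := fun a p => F (Fin.cons a p))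

open Classical in
lemma TT_succ (V : Set (ℤ × ℤ)) (r : ℤ × ℤ) (n : ℕ) (z : ℤ × ℤ) :
    TT V r (n + 1) z = if z ∈ V ∧ z ≠ r then ∑' w, stepProb z w * TT V r n w else 0 := by
  unfold TT
  rw [tsum_cons_path]
  simp only [goodP_cons, pathProb_cons]
  rw [tsum_eq_single z]
  · by_cases hz : z ∈ V ∧ z ≠ r
    · simp only [hz, true_and, if_true, ne_eq, not_false_eq_true]
      simp_rw [← ENNReal.tsum_mul_left]
      rw [ENNReal.tsum_comm]
      apply tsum_congr
      intro p
      split_ifs <;> simp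
    · simp [hz]
  · intro b hb
    simp [hb]

open Classical in
lemma TT_zero (V : Set (ℤ × ℤ)) (r : ℤ × ℤ) (z : ℤ × ℤ) :
    TT V r 0 z = if z = r then 1 else 0 := by
  unfold TT
  rw [tsum_eq_single (fun _ => z)]
  · simp [goodP, pathProb]
  · intro p hp
    have : p 0 ≠ z := by
      intro h
      apply hp
      funext i
      have hi : i = 0 := by omega
      rw [hi, h]
    simp [pathProb, this]

lemma TT_sum_le (V : Set (ℤ × ℤ)) (r : ℤ × ℤ) (G : ℤ × ℤ → ℝ≥0∞) (hr : 1 ≤ G r)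
    (hG : ∀ z ∈ V, z ≠ r → ∑' w, stepProb z w * G w ≤ G z) (N : ℕ) :
    ∀ z, ∑ n ∈ Finset.range N, TT V r n z ≤ G z := by
  induction N with
  | zero => simp
  | succ N ih =>
    intro z
    rw [Finset.sum_range_succ']
    by_cases hz : z = r
    · subst hz
      simpa [TT_succ, TT_zero] using hr
    · by_cases hV : z ∈ V
      · simp only [TT_succ, TT_zero, hz, hV, ne_eq, not_false_eq_true, and_self, if_true, if_false,
          add_zero]
        refine le_trans ?_ (hG z hV hz)
        rw [← Summable.tsum_finsetSum (fun _ _ => ENNReal.summable)]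
        simp_rw [← Finset.mul_sum]
        exact ENNReal.tsum_le_tsum fun w => mul_le_mul_right (ih w) _
      · simp [TT_succ, TT_zero, hz, hV]

open Classical in
lemma prob_le_G {Ω : Type*} [MeasurableSpace Ω] (P : Measure Ω) (S : ℕ → Ω → ℤ × ℤ) (v : ℤ × ℤ)
    (hS : IsCombWalk P S v) (V : Set (ℤ × ℤ)) (r : ℤ × ℤ) (G : ℤ × ℤ → ℝ≥0∞) (hr : 1 ≤ G r)
    (hG : ∀ z ∈ V, z ≠ r → ∑' w, stepProb z w * G w ≤ G z) :
    P {ω | hitTime {r} (fun t => S t ω) < hitTime Vᶜ (fun t => S t ω)} ≤ G v := by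
  have hsub : {ω | hitTime {r} (fun t => S t ω) < hitTime Vᶜ (fun t => S t ω)} ⊆
      ⋃ n : ℕ, ⋃ p : Fin (n + 1) → ℤ × ℤ,
        if goodP V r n p then {ω | ∀ i : Fin (n + 1), S i ω = p i} else ∅ := by
    intro ω hω
    simp only [Set.mem_ofPred_eq] at hω
    have hex : ∃ m, S m ω = r := by
      by_contra! hne
      have : hitTime {r} (fun t => S t ω) = ⊤ := by
        unfold hitTime
        simp [hne]
      rw [this] at hω
      exact absurd hω not_top_lt
    have hn := Nat.find_spec hex
    have hmin : ∀ m < Nat.find hex, S m ω ≠ r := fun m hm => Nat.find_min hex hm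
    set n := Nat.find hex with hndef
    have hge : (n : ℕ∞) ≤ hitTime {r} (fun t => S t ω) := by
      unfold hitTime
      refine le_iInf₂ fun m hm => ?_
      by_contra! hlt
      exact hmin m (by exact_mod_cast hlt) hm
    have hVin : ∀ m < n, S m ω ∈ V := by
      intro m hm
      by_contra hnot
      have h1 : hitTime Vᶜ (fun t => S t ω) ≤ m := iInf₂_le m hnot
      have h2 : (m : ℕ∞) < n := by exact_mod_cast hm
      exact absurd (hω.trans_le h1) (not_lt.mpr (h2.le.trans hge))
    rw [Set.mem_iUnion]
    refine ⟨n, ?_⟩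
    rw [Set.mem_iUnion]
    refine ⟨fun i => S i ω, ?_⟩
    have hg : goodP V r n (fun i => S i ω) :=
      ⟨fun i => ⟨hVin _ (by simp), hmin _ (by simp)⟩, by simpa using hn⟩
    rw [if_pos hg]
    intro i
    rfl
  refine (measure_mono hsub).trans ((measure_iUnion_le _).trans ?_)
  have hT : ∀ n : ℕ, P (⋃ p : Fin (n + 1) → ℤ × ℤ,
        if goodP V r n p then {ω | ∀ i : Fin (n + 1), S i ω = p i} else ∅) ≤ TT V r n v := by
    intro n
    refine (measure_iUnion_le _).trans ?_
    unfold TT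
    refine ENNReal.tsum_le_tsum fun p => ?_
    split_ifs
    · exact (hS.2.2 n p).le
    · simp
  refine (ENNReal.tsum_le_tsum hT).trans ?_
  rw [ENNReal.tsum_eq_iSup_nat]
  exact iSup_le fun N => TT_sum_le V r G hr hG N v

lemma step_sum_zero (G : ℤ × ℤ → ℝ) (hG : ∀ z, 0 ≤ G z) (x : ℤ)
    (h : G (x - 1, 0) + G (x + 1, 0) + G (x, 1) + G (x, -1) ≤ 4 * G (x, 0)) :
    ∑' w, stepProb (x, 0) w * ENNReal.ofReal (G w) ≤ ENNReal.ofReal (G (x, 0)) := by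
  have h4 : ((4 : ℕ) : ℝ≥0∞)⁻¹ = ENNReal.ofReal (1 / 4) := by
    rw [one_div, ENNReal.ofReal_inv_of_pos (by norm_num)]; norm_num
  have ha : |x - (x - 1)| = 1 := by simp
  rw [tsum_eq_sum (s := {(x - 1, 0), (x + 1, 0), (x, 1), (x, -1)})]
  · rw [Finset.sum_insert, Finset.sum_insert, Finset.sum_insert, Finset.sum_singleton]
    · simp only [stepProb, combAdj, combDeg]
      simp only [ha, abs_one, sub_add_cancel_left, abs_neg, zero_sub, neg_neg,
        and_self, or_true, true_or, if_true, h4, true_and]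
      simp only [← ENNReal.ofReal_mul (show (0:ℝ) ≤ 1/4 by norm_num)]
      rw [← ENNReal.ofReal_add, ← ENNReal.ofReal_add, ← ENNReal.ofReal_add]
      · apply ENNReal.ofReal_le_ofReal
        linarith
      all_goals
        have := hG (x - 1, 0); have := hG (x + 1, 0); have := hG (x, 1); have := hG (x, -1)
        positivity
    all_goals simp
    all_goals omega
  · rintro ⟨a, b⟩ hab
    simp only [Finset.mem_insert, Finset.mem_singleton, Prod.mk.injEq, not_or] at hab
    have : ¬ combAdj (x, 0) (a, b) := by
      unfold combAdj
      simp only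
      rintro (⟨h1, h2⟩ | ⟨-, h1, h2⟩) <;> rcases abs_eq (by norm_num : (0:ℤ) ≤ 1) |>.mp h2 with h | h <;> omega
    simp [stepProb, this]

lemma step_sum_ne (G : ℤ × ℤ → ℝ) (hG : ∀ z, 0 ≤ G z) (x y : ℤ) (hy : y ≠ 0)
    (h : G (x, y - 1) + G (x, y + 1) ≤ 2 * G (x, y)) :
    ∑' w, stepProb (x, y) w * ENNReal.ofReal (G w) ≤ ENNReal.ofReal (G (x, y)) := by
  have h4 : ((2 : ℕ) : ℝ≥0∞)⁻¹ = ENNReal.ofReal (1 / 2) := by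
    rw [one_div, ENNReal.ofReal_inv_of_pos (by norm_num)]; norm_num
  have ha : |y - (y - 1)| = 1 := by simp
  rw [tsum_eq_sum (s := {(x, y - 1), (x, y + 1)})]
  · rw [Finset.sum_insert, Finset.sum_singleton]
    · simp only [stepProb, combAdj, combDeg]
      simp only [ha, abs_one, sub_add_cancel_left, abs_neg, hy, 
        and_self, true_or, if_true, h4, if_false]
      simp only [← ENNReal.ofReal_mul (show (0:ℝ) ≤ 1/2 by norm_num)]
      rw [← ENNReal.ofReal_add]
      · apply ENNReal.ofReal_le_ofReal
        linarith
      all_goals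
        have := hG (x, y - 1); have := hG (x, y + 1)
        positivity
    · simp
      omega
  · rintro ⟨a, b⟩ hab
    simp only [Finset.mem_insert, Finset.mem_singleton, Prod.mk.injEq, not_or] at hab
    have : ¬ combAdj (x, y) (a, b) := by
      unfold combAdj
      simp only
      rintro (⟨h1, h2⟩ | ⟨h0, h1, h2⟩) <;> rcases abs_eq (by norm_num : (0:ℤ) ≤ 1) |>.mp h2 with h | h <;> omega
    simp [stepProb, this]

/-- real-valued supersolution bound -/
lemma prob_le_real {Ω : Type*} [MeasurableSpace Ω] (P : Measure Ω) (S : ℕ → Ω → ℤ × ℤ)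
    (v : ℤ × ℤ) (hS : IsCombWalk P S v) (V : Set (ℤ × ℤ)) (R : ℤ) (G : ℤ × ℤ → ℝ)
    (hG : ∀ z, 0 ≤ G z) (hr : 1 ≤ G (R, 0))
    (h0 : ∀ x, (x, 0) ∈ V → x ≠ R →
      G (x - 1, 0) + G (x + 1, 0) + G (x, 1) + G (x, -1) ≤ 4 * G (x, 0))
    (h1 : ∀ x y, y ≠ 0 → (x, y) ∈ V → G (x, y - 1) + G (x, y + 1) ≤ 2 * G (x, y)) :
    P {ω | hitTime {(R, (0 : ℤ))} (fun t => S t ω) < hitTime Vᶜ (fun t => S t ω)} ≤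
      ENNReal.ofReal (G v) := by
  apply prob_le_G P S v hS V (R, 0) (fun z => ENNReal.ofReal (G z))
  · simpa using hr
  · rintro ⟨x, y⟩ hV hne
    by_cases hy : y = 0
    · subst hy
      exact step_sum_zero G hG x (h0 x hV (by rintro rfl; exact hne rfl))
    · exact step_sum_ne G hG x y hy (h1 x y hy hV)

lemma prob_zero {Ω : Type*} [MeasurableSpace Ω] (P : Measure Ω) (S : ℕ → Ω → ℤ × ℤ)
    (hS : IsCombWalk P S (0, 0)) (V : Set (ℤ × ℤ)) (R x : ℤ) (hx0 : 0 ≤ x) (hxR : x < R)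
    (hxV : (x, (0 : ℤ)) ∉ V) :
    P {ω | hitTime {(R, (0 : ℤ))} (fun t => S t ω) < hitTime Vᶜ (fun t => S t ω)} ≤ 0 := by
  have := prob_le_real P S (0, 0) hS V R (fun z => if x < z.1 then 1 else 0)
    (by intro z; positivity) (by simp [hxR])
    (by
      intro a ha _
      have : a ≠ x := by rintro rfl; exact hxV ha
      dsimp only
      split_ifs <;> first | omega | norm_num)
    (by
      intro a y hy ha
      dsimp only
      split_ifs <;> norm_num)
  simpa [not_lt.mpr hx0] using this

noncomputable def uu (e : ℕ → ℝ) : ℕ → ℝ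
  | 0 => e 0
  | n + 1 => e (n + 1) + uu e n / (1 + uu e n)

noncomputable def aa (e : ℕ → ℝ) (n : ℕ) : ℝ := ∏ i ∈ Finset.range n, (1 + uu e i)

lemma uu_nonneg (e : ℕ → ℝ) (he : ∀ n, 0 ≤ e n) (n : ℕ) : 0 ≤ uu e n := by
  induction n with
  | zero => exact he 0
  | succ n ih => have := he (n + 1); simp only [uu]; positivity

lemma uu_le (e : ℕ → ℝ) (he : ∀ n, 0 ≤ e n) (δ : ℝ) (h0 : 0 ≤ δ) (h1 : δ ≤ 1)
    (hd : ∀ n, e n ≤ δ ^ 2) (n : ℕ) : uu e n ≤ 2 * δ := by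
  induction n with
  | zero => have := hd 0; simp only [uu]; nlinarith
  | succ n ih =>
    have h2 := uu_nonneg e he n
    have h3 := hd (n + 1)
    simp only [uu]
    have h4 : uu e n / (1 + uu e n) ≤ 2 * δ / (1 + 2 * δ) := by
      rw [div_le_div_iff₀ (by linarith) (by linarith)]; nlinarith
    have h5 : 2 * δ / (1 + 2 * δ) ≤ 2 * δ - δ ^ 2 := by
      rw [div_le_iff₀ (by linarith)]; nlinarith [mul_nonneg (sq_nonneg δ) (by linarith : 0 ≤ 1 - δ), sq_nonneg δ]
    linarith

lemma aa_pos (e : ℕ → ℝ) (he : ∀ n, 0 ≤ e n) (n : ℕ) : 0 < aa e n := by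
  apply Finset.prod_pos
  intro i _
  have := uu_nonneg e he i
  linarith

lemma aa_rec (e : ℕ → ℝ) (he : ∀ n, 0 ≤ e n) (n : ℕ) :
    aa e n + aa e (n + 2) = (2 + e (n + 1)) * aa e (n + 1) := by
  have h := uu_nonneg e he n
  have h' : (1 + uu e n) ≠ 0 := by linarith
  have h2 : aa e (n + 2) = aa e (n + 1) * (1 + uu e (n + 1)) := Finset.prod_range_succ _ _
  have h3 : aa e (n + 1) = aa e n * (1 + uu e n) := Finset.prod_range_succ _ _
  rw [h2, h3]
  simp only [uu]
  field_simp
  ring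

lemma log_aa (e : ℕ → ℝ) (he : ∀ n, 0 ≤ e n) (δ : ℝ) (h0 : 0 < δ) (h1 : δ ≤ 1)
    (hd : ∀ n, e n ≤ δ ^ 2) (R : ℕ) :
    Real.exp ((∑ i ∈ Finset.range R, e i) / (2 * δ) - 1) ≤ aa e R := by
  have key : ∀ n, ∑ i ∈ Finset.range (n + 1), e i ≤
      2 * δ * ∑ i ∈ Finset.range n, uu e i / (1 + uu e i) + uu e n := by
    intro n
    induction n with
    | zero => simp [uu]
    | succ n ih =>
      rw [Finset.sum_range_succ, Finset.sum_range_succ (fun i => uu e i / (1 + uu e i)) n]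
      have h2 : uu e (n + 1) = e (n + 1) + uu e n / (1 + uu e n) := rfl
      have h3 := uu_nonneg e he n
      have h4 := uu_le e he δ h0.le h1 hd n
      have h5 : uu e n - uu e n / (1 + uu e n) = uu e n * (uu e n / (1 + uu e n)) := by
        field_simp
        ring
      have h6 : 0 ≤ uu e n / (1 + uu e n) := by positivity
      nlinarith
  have key2 : (∑ i ∈ Finset.range R, e i) / (2 * δ) - 1 ≤
      ∑ i ∈ Finset.range R, uu e i / (1 + uu e i) := by
    rw [sub_le_iff_le_add, div_le_iff₀ (by linarith)]
    cases R with
    | zero => simp; linarith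
    | succ n =>
      have h2 := key n
      have h3 := uu_nonneg e he n
      have h4 := uu_le e he δ h0.le h1 hd n
      have h6 : 0 ≤ uu e n / (1 + uu e n) := by positivity
      rw [Finset.sum_range_succ (fun i => uu e i / (1 + uu e i))]
      nlinarith
  refine (Real.exp_le_exp.mpr key2).trans ?_
  rw [Real.exp_sum]
  apply Finset.prod_le_prod
  · intro i _
    positivity
  · intro i _
    have h3 := uu_nonneg e he i
    have h4 := Real.one_sub_le_exp_neg (uu e i / (1 + uu e i))
    have h5 : 1 - uu e i / (1 + uu e i) = (1 + uu e i)⁻¹ := by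
      field_simp
      ring
    rw [h5, Real.exp_neg] at h4
    exact (inv_le_inv₀ (by linarith) (Real.exp_pos _)).mp h4

noncomputable def gg (e : ℕ → ℝ) (R : ℕ) (x : ℤ) : ℝ := aa e (min x.toNat R) / aa e R

lemma gg_pos (e : ℕ → ℝ) (he : ∀ n, 0 ≤ e n) (R : ℕ) (x : ℤ) : 0 < gg e R x :=
  div_pos (aa_pos e he _) (aa_pos e he _)

lemma gg_super (E : ℤ → ℝ) (hE : ∀ x, 0 ≤ E x) (R : ℕ) (hR : 0 < R) (x : ℤ) (hx : x ≠ R) :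
    gg (fun n => E n) R (x - 1) + gg (fun n => E n) R (x + 1) ≤
      (2 + E x) * gg (fun n => E n) R x := by
  have he : ∀ n : ℕ, 0 ≤ (fun n : ℕ => E n) n := fun n => hE n
  have hp := gg_pos (fun n : ℕ => E n) he R x
  have hx0 := hE x
  rcases lt_trichotomy x 0 with h | h | h
  · have h1 : gg (fun n => E n) R (x - 1) = gg (fun n => E n) R x := by
      unfold gg
      congr 3
      omega
    have h2 : gg (fun n => E n) R (x + 1) = gg (fun n => E n) R x := by
      unfold gg
      congr 3
      omega
    rw [h1, h2]
    nlinarith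
  · subst h
    have h1 : min (1 : ℕ) R = 1 := by omega
    have hm : (-1 : ℤ).toNat = 0 := rfl
    have := aa_pos (fun n : ℕ => E n) he R
    simp only [gg, zero_sub, zero_add, hm, Int.toNat_zero, Int.toNat_one, h1,
      Nat.zero_min]
    rw [← add_div, ← mul_div_assoc]
    gcongr
    simp [aa, uu]
    linarith
  · rcases lt_or_gt_of_ne hx with h2 | h2
    · obtain ⟨n, rfl⟩ : ∃ n : ℕ, x = n + 1 := ⟨(x - 1).toNat, by omega⟩
      have h3 : min ((n : ℤ) + 1 - 1).toNat R = n := by omega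
      have h4 : min ((n : ℤ) + 1 + 1).toNat R = n + 2 := by omega
      have h5 : min ((n : ℤ) + 1).toNat R = n + 1 := by omega
      have := aa_rec (fun n : ℕ => E n) he n
      simp only [gg, h3, h4, h5]
      rw [← add_div, this, mul_div_assoc]
      push_cast
      rfl
    · have h1 : gg (fun n => E n) R (x - 1) = gg (fun n => E n) R x := by
        unfold gg
        congr 2
        omega
      have h2 : gg (fun n => E n) R (x + 1) = gg (fun n => E n) R x := by
        unfold gg
        congr 2
        omega
      rw [h1, h2]
      nlinarith

noncomputable def phi (E : ℝ) (p : ℕ) (y : ℤ) : ℝ :=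
  if y < 0 then 1 else if y < p then 1 - E * y else 0

lemma phi_nonneg (E : ℝ) (p : ℕ) (hE : 0 ≤ E) (hEp : E * p ≤ 1) (y : ℤ) : 0 ≤ phi E p y := by
  unfold phi
  split_ifs with h1 h2
  · norm_num
  · have : (y : ℝ) ≤ p := by exact_mod_cast h2.le
    nlinarith
  · norm_num

lemma phi_super (E : ℝ) (p : ℕ) (hE : 0 ≤ E) (hEp : E * p ≤ 1) (y : ℤ) (hy : y ≠ 0)
    (hyp : y ≠ p) : phi E p (y - 1) + phi E p (y + 1) ≤ 2 * phi E p y := by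
  unfold phi
  split_ifs <;> try omega
  · norm_num
  · have : y = -1 := by omega
    subst this
    norm_num
  · norm_num
  · push_cast; linarith
  · have : y + 1 = p := by omega
    have : (y : ℝ) + 1 = p := by exact_mod_cast this
    push_cast
    nlinarith
  · norm_num

lemma main_bound {Ω : Type*} [MeasurableSpace Ω] (P : Measure Ω) (S : ℕ → Ω → ℤ × ℤ)
    (hS : IsCombWalk P S (0, 0)) (V : Set (ℤ × ℤ)) (R : ℕ) (hR : 0 < R)
    (hRV : ((R : ℤ), (0 : ℤ)) ∈ V) (p : ℤ → ℕ) (hp1 : ∀ x, (x, (0 : ℤ)) ∈ V → 0 < p x)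
    (hp2 : ∀ x, (x, (p x : ℤ)) ∉ V) (E : ℤ → ℝ) (hE : ∀ x, 0 ≤ E x) (hEp : ∀ x, E x * p x ≤ 1) :
    P {ω | hitTime {((R : ℤ), (0 : ℤ))} (fun t => S t ω) < hitTime Vᶜ (fun t => S t ω)} ≤
      ENNReal.ofReal (1 / aa (fun n => E n) R) := by
  have he : ∀ n : ℕ, 0 ≤ (fun n : ℕ => E n) n := fun n => hE n
  have hg := gg_pos (fun n : ℕ => E n) he R
  have hphi0 : ∀ x, (x, (0 : ℤ)) ∈ V → phi (E x) (p x) 0 = 1 := by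
    intro x hx
    have := hp1 x hx
    simp [phi, this]
  have hphi0' : ∀ x, phi (E x) (p x) 0 ≤ 1 := by
    intro x
    unfold phi
    split_ifs <;> simp
  have hphim : ∀ x, phi (E x) (p x) (-1) = 1 := by
    intro x
    simp [phi]
  have hphi1 : ∀ x, phi (E x) (p x) 1 ≤ 1 - E x ∨ p x = 0 := by
    intro x
    by_cases h : p x = 0
    · exact Or.inr h
    left
    unfold phi
    have : (1 : ℝ) ≤ p x := by exact_mod_cast Nat.one_le_iff_ne_zero.mpr h
    have h1 := hE x
    have h2 := hEp x
    split_ifs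
    · omega
    · simp
    · nlinarith
  refine (prob_le_real P S (0, 0) hS V R
    (fun z => gg (fun n => E n) R z.1 * phi (E z.1) (p z.1) z.2) ?_ ?_ ?_ ?_).trans ?_
  · intro z
    exact mul_nonneg (hg _).le (phi_nonneg _ _ (hE _) (hEp _) _)
  · have := aa_pos (fun n : ℕ => E n) he R
    simp only [hphi0 _ hRV, mul_one, gg, Int.toNat_natCast, min_self]
    rw [div_self this.ne']
  · intro x hx hne
    have h1 := gg_super E hE R hR x hne
    have h2 := hp1 x hx
    have h3 := (hphi1 x).resolve_right (by omega)
    simp only [hphi0 x hx, hphim x]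
    have h4 := mul_le_mul_of_nonneg_left (hphi0' (x - 1)) (hg (x - 1)).le
    have h5 := mul_le_mul_of_nonneg_left (hphi0' (x + 1)) (hg (x + 1)).le
    have h6 := mul_le_mul_of_nonneg_left h3 (hg x).le
    linarith
  · intro x y hy hV
    have := phi_super (E x) (p x) (hE x) (hEp x) y hy (by rintro rfl; exact hp2 x hV)
    dsimp only
    have h6 := mul_le_mul_of_nonneg_left this (hg x).le
    linarith
  · apply ENNReal.ofReal_le_ofReal
    have h := mul_le_mul_of_nonneg_left (hphi0' 0) (hg 0).le
    refine h.trans ?_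
    simp [gg, aa]

/-- **Lemma (crossing estimate).** There are positive constants `a₃`, `κ₃`,
independent of `R` and `V`, such that for `V ⊆ ℤ²` containing `(0,0)` and `(R,0)`,
`P₀(H((R,0)) < H(Vᶜ)) ≤ exp(a₃ − κ₃ √(R³/|V|))`. -/
theorem comb_crossing_estimate :
    ∃ a₃ κ₃ : ℝ, 0 < a₃ ∧ 0 < κ₃ ∧
      ∀ R : ℕ, 0 < R → ∀ V : Set (ℤ × ℤ),
        ((0, 0) : ℤ × ℤ) ∈ V → (((R : ℤ), (0 : ℤ)) : ℤ × ℤ) ∈ V →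
        ∀ (Ω : Type*) [MeasurableSpace Ω] (P : Measure Ω) (S : ℕ → Ω → ℤ × ℤ),
          IsCombWalk P S (0, 0) →
          P {ω | hitTime {(((R : ℤ), (0 : ℤ)) : ℤ × ℤ)} (fun t => S t ω) <
              hitTime Vᶜ (fun t => S t ω)} ≤
            ENNReal.ofReal (Real.exp (a₃ - κ₃ * Real.sqrt ((R : ℝ) ^ 3 / (V.ncard : ℝ)))) := by
  refine ⟨1, 1 / 4, by norm_num, by norm_num, ?_⟩
  intro R hR V h0 hRV Ω _ P S hS
  have hPm : IsProbabilityMeasure P := hS.1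
  by_cases hfin : V.Finite
  swap
  · have : V.ncard = 0 := Set.Infinite.ncard hfin
    simp only [this, Nat.cast_zero, div_zero, Real.sqrt_zero, mul_zero, sub_zero]
    refine prob_le_one.trans ?_
    rw [ENNReal.one_le_ofReal]
    exact Real.one_le_exp (by norm_num)
  by_cases hx : ∃ x : ℤ, 0 ≤ x ∧ x < R ∧ (x, (0 : ℤ)) ∉ V
  · obtain ⟨x, hx0, hxR, hxV⟩ := hx
    exact (prob_zero P S hS V R x hx0 hxR hxV).trans zero_le
  push Not at hx
  have hex : ∀ x : ℤ, ∃ n : ℕ, (x, (n : ℤ)) ∉ V := by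
    intro x
    by_contra! hall
    have hinj : Function.Injective (fun n : ℕ => (x, (n : ℤ))) := by
      intro a b hab
      simpa using hab
    exact (Set.infinite_of_injective_forall_mem hinj hall) hfin
  classical
  let p : ℤ → ℕ := fun x => Nat.find (hex x)
  have hp2 : ∀ x, (x, (p x : ℤ)) ∉ V := fun x => Nat.find_spec (hex x)
  have hp1' : ∀ x, ∀ m < p x, (x, (m : ℤ)) ∈ V := fun x m hm => by
    simpa using Nat.find_min (hex x) hm
  have hp1 : ∀ x, (x, (0 : ℤ)) ∈ V → 0 < p x := by
    intro x hxV
    by_contra h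
    have h' : p x = 0 := by omega
    have := hp2 x
    rw [h'] at this
    exact this hxV
  have hsum : ∑ i ∈ Finset.range R, p (i : ℤ) ≤ V.ncard := by
    have h1 : ∑ i ∈ Finset.range R, p (i : ℤ) =
        ((Finset.range R).sigma (fun i => Finset.range (p (i : ℤ)))).card := by
      simp
    rw [h1, Set.ncard_eq_toFinset_card V hfin]
    apply Finset.card_le_card_of_injOn (fun q : (_ : ℕ) × ℕ => ((q.1 : ℤ), (q.2 : ℤ)))
    · rintro ⟨i, m⟩ hq
      simp only [Finset.coe_sigma, Set.mem_sigma_iff, Finset.coe_range, Set.mem_Iio] at hq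
      simpa using hp1' i m hq.2
    · rintro ⟨i, m⟩ - ⟨j, k⟩ - h
      simp only [Prod.mk.injEq, Nat.cast_inj] at h
      obtain ⟨rfl, rfl⟩ := h
      rfl
  have hRN : R ≤ V.ncard := by
    refine le_trans ?_ hsum
    calc R = ∑ i ∈ Finset.range R, 1 := by simp
      _ ≤ _ := Finset.sum_le_sum fun i hi => by
        have hi' := Finset.mem_range.mp hi
        exact hp1 _ (hx i (by omega) (by omega))
  set N := V.ncard with hN
  have hRr : (0 : ℝ) < R := by exact_mod_cast hR
  have hRNr : (R : ℝ) ≤ N := by exact_mod_cast hRN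
  have hNr : (0 : ℝ) < N := hRr.trans_le hRNr
  have hM : (0 : ℝ) < (N : ℝ) / R := div_pos hNr hRr
  let E : ℤ → ℝ := fun x => 1 / ((p x : ℝ) + (N : ℝ) / R)
  have hE : ∀ x, 0 ≤ E x := fun x => by positivity
  have hEp : ∀ x, E x * p x ≤ 1 := fun x => by
    have : (0 : ℝ) ≤ p x := by positivity
    simp only [E]
    rw [one_div_mul_eq_div, div_le_one (by linarith)]
    linarith
  refine (main_bound P S hS V R hR hRV p hp1 hp2 E hE hEp).trans ?_
  apply ENNReal.ofReal_le_ofReal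
  set δ := Real.sqrt ((R : ℝ) / N) with hδ
  have hδ0 : 0 < δ := Real.sqrt_pos.mpr (by positivity)
  have hδ2 : δ ^ 2 = (R : ℝ) / N := Real.sq_sqrt (by positivity)
  have hδ1 : δ ≤ 1 := by
    rw [hδ, Real.sqrt_le_one, div_le_one hNr]
    exact hRNr
  have hEd : ∀ n : ℕ, (fun n : ℕ => E n) n ≤ δ ^ 2 := by
    intro n
    have : (0 : ℝ) ≤ p n := by positivity
    simp only [E]
    rw [hδ2, ← one_div_div (N : ℝ) (R : ℝ)]
    apply one_div_le_one_div_of_le hM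
    linarith
  have hl := log_aa (fun n : ℕ => E n) (fun n => hE n) δ hδ0 hδ1 hEd R
  have hCS : (R : ℝ) ^ 2 / (2 * N) ≤ ∑ i ∈ Finset.range R, E i := by
    have h1 := Finset.sq_sum_div_le_sum_sq_div (Finset.range R) (fun _ => (1 : ℝ))
      (g := fun i : ℕ => (p i : ℝ) + (N : ℝ) / R) (fun i _ => by positivity)
    simp only [one_pow] at h1
    refine le_trans ?_ h1
    have h2 : ∑ i ∈ Finset.range R, ((p i : ℝ) + (N : ℝ) / R) ≤ 2 * N := by
      rw [Finset.sum_add_distrib]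
      have h3 : (∑ i ∈ Finset.range R, (p i : ℝ)) ≤ N := by exact_mod_cast hsum
      have h4 : ∑ i ∈ Finset.range R, (N : ℝ) / R = N := by
        simp
        field_simp
      linarith
    have h5 : 0 < ∑ i ∈ Finset.range R, ((p i : ℝ) + (N : ℝ) / R) :=
      Finset.sum_pos (fun i _ => by positivity) ⟨0, by simpa using hR⟩
    simp only [Finset.sum_const, Finset.card_range, nsmul_eq_mul, mul_one]
    gcongr
  have hsq : Real.sqrt ((R : ℝ) ^ 3 / N) = R * δ := by
    rw [show (R : ℝ) ^ 3 / N = R ^ 2 * (R / N) by ring, Real.sqrt_mul (by positivity),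
      Real.sqrt_sq hRr.le]
  have hfin2 : 1 / 4 * (R * δ) ≤ (∑ i ∈ Finset.range R, E i) / (2 * δ) := by
    rw [le_div_iff₀ (by linarith)]
    refine le_trans (le_of_eq ?_) hCS
    calc 1 / 4 * (R * δ) * (2 * δ) = 1 / 2 * R * δ ^ 2 := by ring
      _ = _ := by rw [hδ2]; field_simp
  rw [hsq, show (1 : ℝ) - 1 / 4 * (R * δ) = -(1 / 4 * (R * δ) - 1) by ring, Real.exp_neg,
    ← one_div]
  apply one_div_le_one_div_of_le (Real.exp_pos _)
  refine le_trans ?_ hl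
  apply Real.exp_le_exp.mpr
  linarith
end

section
/- There exist constants β>0 and κ₂>0 such that for all integers R and n with d(n) < β·R³, the internal DLA cluster on the comb satisfies P( (R,0) ∈ A(n) ) ≤ exp( −κ₂·R² ). -/
open MeasureTheory ENNReal
open scoped Pointwise

namespace CombT

/-- Position of a path stopped at the exit from `C` (or at the horizon). -/
def stopF (C : Finset (ℤ × ℤ)) : (T : ℕ) → (Fin (T + 1) → ℤ × ℤ) → ℤ × ℤ
  | 0, p => p 0
  | T + 1, p => if p 0 ∈ C then stopF C T (fun i => p i.succ) else p 0

def trClu (T : ℕ) : (k : ℕ) → (Fin k → Fin (T + 1) → ℤ × ℤ) → Finset (ℤ × ℤ)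
  | 0, _ => ∅
  | k + 1, p =>
    insert (stopF (trClu T k (fun i => p i.castSucc)) T (p (Fin.last k)))
      (trClu T k (fun i => p i.castSucc))

lemma trClu_card (T k : ℕ) (p : Fin k → Fin (T + 1) → ℤ × ℤ) : (trClu T k p).card ≤ k := by
  induction k with
  | zero => simp [trClu]
  | succ k ih =>
    rw [trClu]
    exact (Finset.card_insert_le _ _).trans (by have := ih (fun i => p i.castSucc); omega)

noncomputable def val (C : Finset (ℤ × ℤ)) (F : ℤ × ℤ → ℝ≥0∞) (T : ℕ) (v : ℤ × ℤ) : ℝ≥0∞ :=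
  ∑' p : Fin (T + 1) → ℤ × ℤ, pathProb v p * F (stopF C T p)

lemma stepProb_tsum (z : ℤ × ℤ) (F : ℤ × ℤ → ℝ≥0∞) :
    ∑' w, stepProb z w * F w =
      if z.2 = 0 then 4⁻¹ * (F (z.1 + 1, 0) + F (z.1 - 1, 0) + F (z.1, 1) + F (z.1, -1))
      else 2⁻¹ * (F (z.1, z.2 + 1) + F (z.1, z.2 - 1)) := by
  obtain ⟨x, k⟩ := z
  by_cases hk : k = 0
  · subst hk
    rw [tsum_eq_sum (s := {(x + 1, 0), (x - 1, 0), (x, 1), (x, -1)})]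
    · rw [Finset.sum_insert, Finset.sum_insert, Finset.sum_insert, Finset.sum_singleton]
      · simp [stepProb, combAdj, combDeg]
        ring
      · simp
      · simp
      · simp; omega
    · rintro ⟨a, b⟩ h
      have : ¬ combAdj (x, 0) (a, b) := by
        simp only [combAdj]
        simp only [Finset.mem_insert, Finset.mem_singleton, Prod.mk.injEq] at h
        intro h'
        rcases h' with ⟨h1, h2⟩ | ⟨h1, h2, h3⟩
        · rcases (abs_eq (by norm_num)).1 h2 with h | h <;> omega
        · rcases (abs_eq (by norm_num)).1 h3 with h | h <;> omega
      simp [stepProb, this]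
  · rw [tsum_eq_sum (s := {(x, k + 1), (x, k - 1)})]
    · rw [Finset.sum_insert, Finset.sum_singleton]
      · simp [stepProb, combAdj, combDeg, hk]
        ring
      · simp; omega
    · rintro ⟨a, b⟩ h
      have : ¬ combAdj (x, k) (a, b) := by
        simp only [combAdj]
        simp only [Finset.mem_insert, Finset.mem_singleton, Prod.mk.injEq] at h
        intro h'
        rcases h' with ⟨h1, h2⟩ | ⟨h1, h2, h3⟩
        · rcases (abs_eq (by norm_num)).1 h2 with h | h <;> omega
        · omega
      simp [stepProb, this]

lemma pathProb_zero_tsum (v : ℤ × ℤ) (F : (Fin 1 → ℤ × ℤ) → ℝ≥0∞) :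
    ∑' p : Fin (0 + 1) → ℤ × ℤ, pathProb v p * F p = F (fun _ => v) := by
  rw [tsum_eq_single (fun _ => v)]
  · simp [pathProb]
  · intro p hp
    have : p 0 ≠ v := by
      intro h; apply hp; funext i; rw [show i = 0 from Fin.ext (by have := i.2; simp)]; exact h
    simp [pathProb, this]

lemma pathProb_succ_tsum (v : ℤ × ℤ) (T : ℕ) (F : (Fin (T + 1 + 1) → ℤ × ℤ) → ℝ≥0∞) :
    ∑' p : Fin (T + 1 + 1) → ℤ × ℤ, pathProb v p * F p =
      ∑' w, stepProb v w * ∑' q : Fin (T + 1) → ℤ × ℤ, pathProb w q * F (Fin.cons v q) := by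
  have e := (Fin.consEquiv (fun _ : Fin (T + 1 + 1) => ℤ × ℤ)).tsum_eq
    (fun p => pathProb v p * F p)
  rw [← e, ENNReal.tsum_prod (f := fun a q => (fun p => pathProb v p * F p)
    ((Fin.consEquiv (fun _ : Fin (T + 1 + 1) => ℤ × ℤ)) (a, q)))]
  rw [tsum_eq_single v]
  · simp_rw [← ENNReal.tsum_mul_left]
    rw [ENNReal.tsum_comm]
    congr 1; funext q
    rw [tsum_eq_single (q 0)]
    · simp [pathProb, Fin.consEquiv, Fin.prod_univ_succ]
      ring
    · intro w hw
      simp [pathProb, Ne.symm hw]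
  · intro a ha
    simp [pathProb, Fin.consEquiv, ha]

lemma stepProb_total (v : ℤ × ℤ) : ∑' w, stepProb v w = 1 := by
  have := stepProb_tsum v (fun _ => 1)
  simp only [mul_one] at this
  rw [this]
  split_ifs
  · rw [show (1 + 1 + 1 + 1 : ℝ≥0∞) = 4 by norm_num]
    exact ENNReal.inv_mul_cancel (by norm_num) (by norm_num)
  · rw [show (1 + 1 : ℝ≥0∞) = 2 by norm_num]
    exact ENNReal.inv_mul_cancel (by norm_num) (by norm_num)

lemma pathProb_total (v : ℤ × ℤ) (T : ℕ) :
    ∑' p : Fin (T + 1) → ℤ × ℤ, pathProb v p = 1 := by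
  induction T generalizing v with
  | zero => simpa using pathProb_zero_tsum v (fun _ => 1)
  | succ T ih =>
    have := pathProb_succ_tsum v T (fun _ => 1)
    simp only [mul_one] at this
    rw [this]
    simp_rw [ih]
    simpa using stepProb_total v

lemma val_zero (C F v) : val C F 0 v = F v := by
  unfold val
  exact pathProb_zero_tsum v (fun p => F (stopF C 0 p))

lemma val_succ (C F T v) :
    val C F (T + 1) v = if v ∈ C then ∑' w, stepProb v w * val C F T w else F v := by
  unfold val
  rw [pathProb_succ_tsum v T (fun p => F (stopF C (T + 1) p))]
  split_ifs with h
  · simp [stopF, h]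
  · simp only [stopF, Fin.cons_zero, h, if_false]
    simp_rw [ENNReal.tsum_mul_right, pathProb_total]
    simp [ENNReal.tsum_mul_right, stepProb_total]

/-- averaging operator -/
noncomputable def avg (u : ℤ × ℤ → ℝ) (z : ℤ × ℤ) : ℝ :=
  if z.2 = 0 then (u (z.1 + 1, 0) + u (z.1 - 1, 0) + u (z.1, 1) + u (z.1, -1)) / 4
      else (u (z.1, z.2 + 1) + u (z.1, z.2 - 1)) / 2

def nbrIn (Reg : Set (ℤ × ℤ)) (z : ℤ × ℤ) : Prop :=
  (z.1, z.2 + 1) ∈ Reg ∧ (z.1, z.2 - 1) ∈ Reg ∧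
    (z.2 = 0 → (z.1 + 1, 0) ∈ Reg ∧ (z.1 - 1, 0) ∈ Reg)

lemma step_le (z : ℤ × ℤ) (Reg : Set (ℤ × ℤ)) (hz : nbrIn Reg z) (u : ℤ × ℤ → ℝ)
    (hu : ∀ w ∈ Reg, 0 ≤ u w) (V : ℤ × ℤ → ℝ≥0∞) (g0 : ℝ≥0∞)
    (hV : ∀ w ∈ Reg, V w ≤ g0 * ENNReal.ofReal (u w)) :
    ∑' w, stepProb z w * V w ≤ g0 * ENNReal.ofReal (avg u z) := by
  rw [stepProb_tsum, avg]
  obtain ⟨h1, h2, h3⟩ := hz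
  split_ifs with h
  · obtain ⟨h4, h5⟩ := h3 h
    rw [h] at h1 h2
    simp only [zero_add, zero_sub] at h1 h2
    rw [ENNReal.ofReal_div_of_pos (by norm_num), ENNReal.ofReal_add, ENNReal.ofReal_add,
      ENNReal.ofReal_add]
    · calc _ ≤ 4⁻¹ * (g0 * ENNReal.ofReal (u (z.1 + 1, 0)) + g0 * ENNReal.ofReal (u (z.1 - 1, 0))
            + g0 * ENNReal.ofReal (u (z.1, 1)) + g0 * ENNReal.ofReal (u (z.1, -1))) := by
            gcongr <;> exact hV _ ‹_›
        _ = _ := by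
          rw [div_eq_mul_inv, show ENNReal.ofReal 4 = 4 by simp]; ring
    all_goals (have := hu _ h1; have := hu _ h2; have := hu _ h4; have := hu _ h5; positivity)
  · rw [ENNReal.ofReal_div_of_pos (by norm_num), ENNReal.ofReal_add]
    · calc _ ≤ 2⁻¹ * (g0 * ENNReal.ofReal (u (z.1, z.2 + 1))
            + g0 * ENNReal.ofReal (u (z.1, z.2 - 1))) := by
            gcongr <;> exact hV _ ‹_›
        _ = _ := by
          rw [div_eq_mul_inv, show ENNReal.ofReal 2 = 2 by simp]; ring
    all_goals (have := hu _ h1; have := hu _ h2; positivity)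

lemma avg_add_const (u : ℤ × ℤ → ℝ) (c : ℝ) (z) : avg (fun w => u w + c) z = avg u z + c := by
  unfold avg; split_ifs <;> ring

lemma val_bound (C : Finset (ℤ × ℤ)) (F : ℤ × ℤ → ℝ≥0∞) (g0 : ℝ≥0∞) (Reg : Set (ℤ × ℤ))
    (u : ℤ × ℤ → ℝ) (η : ℝ) (hη : 0 ≤ η)
    (hnbr : ∀ z ∈ C, nbrIn Reg z) (hu : ∀ w ∈ Reg, 0 ≤ u w)
    (hsup : ∀ z ∈ C, avg u z + η ≤ u z)
    (hF1 : ∀ z ∈ C, F z ≤ g0) (hF2 : ∀ z ∈ Reg, z ∉ C → F z ≤ g0 * ENNReal.ofReal (u z))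
    (s : ℕ) (c : ℝ) (hc : 0 ≤ c) (hs : 1 ≤ s * η + c) (z) (hz : z ∈ Reg) :
    val C F s z ≤ g0 * ENNReal.ofReal (u z + c) := by
  induction s generalizing c z with
  | zero =>
    rw [val_zero]
    by_cases h : z ∈ C
    · refine (hF1 z h).trans ?_
      have : (1 : ℝ≥0∞) ≤ ENNReal.ofReal (u z + c) := by
        rw [ENNReal.one_le_ofReal]; have := hu z hz; simp at hs; linarith
      calc g0 = g0 * 1 := by simp
        _ ≤ _ := by gcongr
    · refine (hF2 z hz h).trans ?_
      gcongr; linarith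
  | succ s ih =>
    rw [val_succ]
    split_ifs with h
    · refine (step_le z Reg (hnbr z h) (fun w => u w + (c + η)) ?_ _ g0 ?_).trans ?_
      · intro w hw; have := hu w hw; positivity
      · intro w hw
        exact ih (c + η) (by positivity) (by push_cast at hs; linarith) w hw
      · rw [avg_add_const]
        gcongr g0 * ENNReal.ofReal ?_
        have := hsup z h; linarith
    · refine (hF2 z hz h).trans ?_
      gcongr; linarith

end CombT

namespace CombT

noncomputable def pd (t : ℕ → ℝ) : ℕ → ℝ × ℝ
  | 0 => (1, 2 * t 0)
  | n + 1 => ((pd t n).1 + (pd t n).2,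
      (pd t n).2 + 2 * t (n + 1) * ((pd t n).1 + (pd t n).2))

lemma pd_pos (t : ℕ → ℝ) (ht : ∀ n, 0 ≤ t n) (n : ℕ) : 1 ≤ (pd t n).1 ∧ 0 ≤ (pd t n).2 := by
  induction n with
  | zero => simp [pd, ht]
  | succ n ih =>
    obtain ⟨h1, h2⟩ := ih
    refine ⟨by simp only [pd]; linarith, ?_⟩
    simp only [pd]
    have := ht (n + 1)
    positivity

lemma pd_mono (t : ℕ → ℝ) (ht : ∀ n, 0 ≤ t n) : Monotone (fun n => (pd t n).1) := by
  apply monotone_nat_of_le_succ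
  intro n
  have := (pd_pos t ht n).2
  simp only [pd]; linarith

open Classical in
lemma pd_delta (bad : ℕ → Prop) (a : ℝ) (ha : 0 ≤ a) (t : ℕ → ℝ)
    (ht : t = fun n => if bad n then 0 else a) (s d : ℕ) :
    2 * a * (pd t s).1 * ((d + 1 : ℝ) - (Nat.count bad (s + d + 1) - Nat.count bad s)) ≤
      (pd t (s + d)).2 := by
  have ht0 : ∀ n, 0 ≤ t n := by intro n; rw [ht]; dsimp; split_ifs <;> simp [ha]
  induction d with
  | zero =>
    have h1 := pd_pos t ht0 s
    have key : 2 * t s * (pd t s).1 ≤ (pd t s).2 := by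
      cases s with
      | zero => simp [pd]
      | succ s => have := (pd_pos t ht0 s).2; simp only [pd]; linarith
    rw [Nat.add_zero, Nat.count_succ]
    by_cases hb : bad s
    · simp [hb, h1.2]
    · simp [hb]
      rw [ht] at key ⊢
      simp only [hb, if_false] at key
      linarith
  | succ d ih =>
    have hm : (pd t s).1 ≤ (pd t (s + d + 1)).1 := pd_mono t ht0 (by omega)
    have e : (pd t (s + (d + 1))).2 = (pd t (s + d)).2 + 2 * t (s + d + 1) * (pd t (s + d + 1)).1 := rfl
    rw [e, ← add_assoc, Nat.count_succ]
    have h1 := pd_pos t ht0 s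
    by_cases hb : bad (s + d + 1)
    · have : t (s + d + 1) = 0 := by rw [ht]; simp [hb]
      rw [this]; simp only [hb, if_true]; push_cast; linarith
    · have : t (s + d + 1) = a := by rw [ht]; simp [hb]
      rw [this]; simp only [hb, if_false]; push_cast
      have : a * (pd t s).1 ≤ a * (pd t (s + d + 1)).1 := by gcongr
      linarith

open Classical in
lemma pd_block (bad : ℕ → Prop) (v : ℕ) (hv : 1 ≤ v) (t : ℕ → ℝ)
    (ht : t = fun n => if bad n then 0 else 1 / (v : ℝ) ^ 2) (s : ℕ)
    (hb : Nat.count bad (s + 2 * v) ≤ Nat.count bad s + v) :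
    2 * (pd t s).1 ≤ (pd t (s + 2 * v)).1 := by
  have ht0 : ∀ n, 0 ≤ t n := by intro n; rw [ht]; dsimp; split_ifs <;> positivity
  have h1 := pd_pos t ht0 s
  have hv' : (1 : ℝ) ≤ v := by exact_mod_cast hv
  have key : ∀ d ≤ v, (pd t s).1 * (1 + 1 / (v : ℝ) ^ 2 * (d * (d + 1))) ≤ (pd t (s + v + d)).1 := by
    intro d
    induction d with
    | zero =>
      intro _; simp
      exact pd_mono t ht0 (by omega : s ≤ s + v)
    | succ d ih =>
      intro hd
      have ih' := ih (by omega)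
      have h2 := pd_delta bad (1 / (v : ℝ) ^ 2) (by positivity) t ht s (v + d)
      have h3 : (Nat.count bad (s + (v + d) + 1) : ℝ) ≤ Nat.count bad s + v := by
        have : Nat.count bad (s + (v + d) + 1) ≤ Nat.count bad (s + 2 * v) :=
          Nat.count_monotone _ (by omega)
        exact_mod_cast this.trans hb
      have h4 : 2 * (1 / (v : ℝ) ^ 2) * (pd t s).1 * (d + 1) ≤ (pd t (s + v + d)).2 := by
        rw [← add_assoc] at h2
        refine le_trans ?_ h2
        have h0 : 0 ≤ (pd t s).1 := by linarith [h1.1]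
        refine mul_le_mul_of_nonneg_left ?_ (by positivity)
        push_cast at h3 ⊢
        rw [← add_assoc] at h3
        linarith
      have e : (pd t (s + v + (d + 1))).1 = (pd t (s + v + d)).1 + (pd t (s + v + d)).2 := by
        rw [← add_assoc]; rfl
      rw [e]
      push_cast
      calc _ = (pd t s).1 * (1 + 1 / (v : ℝ) ^ 2 * (d * (d + 1))) +
            2 * (1 / (v : ℝ) ^ 2) * (pd t s).1 * (d + 1) := by ring
        _ ≤ _ := add_le_add ih' h4
  have := key v le_rfl
  rw [show s + 2 * v = s + v + v by ring]
  refine le_trans ?_ this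
  have h5 : (1 : ℝ) ≤ 1 / (v : ℝ) ^ 2 * (v * (v + 1)) := by
    rw [one_div, inv_mul_eq_div, le_div_iff₀ (by positivity)]; nlinarith
  nlinarith [h1.1]

open Classical in
lemma pd_growth (bad : ℕ → Prop) (v : ℕ) (hv : 1 ≤ v) (t : ℕ → ℝ)
    (ht : t = fun n => if bad n then 0 else 1 / (v : ℝ) ^ 2) (b g : ℕ)
    (hb : Nat.count bad (2 * v * b) ≤ v * g) :
    (2 : ℝ) ^ b ≤ (pd t (2 * v * b)).1 * 2 ^ g := by
  have ht0 : ∀ n, 0 ≤ t n := by intro n; rw [ht]; dsimp; split_ifs <;> positivity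
  induction b generalizing g with
  | zero => simp [pd]; exact one_le_pow₀ (by norm_num)
  | succ b ih =>
    have e : 2 * v * (b + 1) = 2 * v * b + 2 * v := by ring
    rw [e] at hb ⊢
    by_cases h : Nat.count bad (2 * v * b + 2 * v) ≤ Nat.count bad (2 * v * b) + v
    · have h1 := pd_block bad v hv t ht _ h
      have h2 := ih g (le_trans (Nat.count_monotone _ (by omega)) hb)
      rw [pow_succ]
      have : (2 * (pd t (2 * v * b)).1) * 2 ^ g ≤ (pd t (2 * v * b + 2 * v)).1 * 2 ^ g := by gcongr
      linarith
    · push Not at h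
      obtain ⟨g, rfl⟩ : ∃ g', g = g' + 1 := by
        cases g with
        | zero => simp at hb; omega
        | succ g => exact ⟨g, rfl⟩
      have h2 := ih g (by rw [mul_add] at hb; omega)
      have h1 : (pd t (2 * v * b)).1 ≤ (pd t (2 * v * b + 2 * v)).1 := pd_mono t ht0 (by omega)
      rw [pow_succ, pow_succ]
      have : (pd t (2 * v * b)).1 * 2 ^ g ≤ (pd t (2 * v * b + 2 * v)).1 * 2 ^ g := by gcongr
      linarith

end CombT

namespace CombT

def good (D : Finset (ℤ × ℤ)) : Prop :=
  ∀ z ∈ D, (∀ j, (0 ≤ j ∧ j ≤ z.2 ∨ z.2 ≤ j ∧ j ≤ 0) → (z.1, j) ∈ D) ∧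
    (∀ i, (0 ≤ i ∧ i ≤ z.1 ∨ z.1 ≤ i ∧ i ≤ 0) → (i, (0 : ℤ)) ∈ D)

def Reg (C : Finset (ℤ × ℤ)) : Set (ℤ × ℤ) := {z | good (insert z C)}

lemma zero_mem_Reg (C : Finset (ℤ × ℤ)) (hC : good C) : ((0 : ℤ), (0 : ℤ)) ∈ Reg C := by
  intro z hz
  rcases Finset.mem_insert.1 hz with rfl | hz
  · constructor
    · intro j hj
      have : j = 0 := by simp at hj; omega
      simp [this]
    · intro j hj
      have : j = 0 := by simp at hj; omega
      simp [this]
  · exact ⟨fun j hj => Finset.mem_insert_of_mem ((hC z hz).1 j hj),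
      fun j hj => Finset.mem_insert_of_mem ((hC z hz).2 j hj)⟩

lemma nbr_mem_Reg (C : Finset (ℤ × ℤ)) (hC : good C) (z : ℤ × ℤ) (hz : z ∈ C) :
    nbrIn (Reg C) z := by
  obtain ⟨x, k⟩ := z
  have vert : ∀ k', (k' = k + 1 ∨ k' = k - 1) → (x, k') ∈ Reg C := by
    intro k' hk' w hw
    rcases Finset.mem_insert.1 hw with rfl | hw
    · constructor
      · intro j hj
        by_cases h : j = k'
        · simp [h]
        · exact Finset.mem_insert_of_mem ((hC _ hz).1 j (by simp at hj ⊢; omega))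
      · intro i hi
        exact Finset.mem_insert_of_mem ((hC _ hz).2 i hi)
    · exact ⟨fun j hj => Finset.mem_insert_of_mem ((hC w hw).1 j hj),
        fun j hj => Finset.mem_insert_of_mem ((hC w hw).2 j hj)⟩
  have hor : ∀ x', (x' = x + 1 ∨ x' = x - 1) → (x', (0 : ℤ)) ∈ Reg C := by
    intro x' hx' w hw
    rcases Finset.mem_insert.1 hw with rfl | hw
    · constructor
      · intro j hj
        have : j = 0 := by simp at hj; omega
        simp [this]
      · intro i hi
        by_cases h : i = x'
        · simp [h]
        · exact Finset.mem_insert_of_mem ((hC _ hz).2 i (by simp at hi ⊢; omega))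
    · exact ⟨fun j hj => Finset.mem_insert_of_mem ((hC w hw).1 j hj),
        fun j hj => Finset.mem_insert_of_mem ((hC w hw).2 j hj)⟩
  exact ⟨vert _ (Or.inl rfl), vert _ (Or.inr rfl), fun _ => ⟨hor _ (Or.inl rfl), hor _ (Or.inr rfl)⟩⟩

def colCnt (C : Finset (ℤ × ℤ)) (x : ℤ) : ℕ := (C.filter (fun z => z.1 = x)).card
def tail (C : Finset (ℤ × ℤ)) (y : ℤ) : ℕ := (C.filter (fun z => y ≤ z.1)).card

lemma col_height (D : Finset (ℤ × ℤ)) (hD : good D) (x k : ℤ) (h : (x, k) ∈ D) :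
    |k| + 1 ≤ colCnt D x := by
  rcases le_total 0 k with hk | hk
  · have : (Finset.Icc 0 k).card ≤ colCnt D x := by
      apply Finset.card_le_card_of_injOn (fun j => (x, j))
      · intro j hj
        simp only [Finset.coe_Icc, Set.mem_Icc] at hj
        simpa using (hD _ h).1 j (Or.inl hj)
      · intro a _ b _ hab; simpa using hab
    rw [Int.card_Icc] at this
    rw [abs_of_nonneg hk]; omega
  · have : (Finset.Icc k 0).card ≤ colCnt D x := by
      apply Finset.card_le_card_of_injOn (fun j => (x, j))
      · intro j hj
        simp only [Finset.coe_Icc, Set.mem_Icc] at hj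
        simpa using (hD _ h).1 j (Or.inr hj)
      · intro a _ b _ hab; simpa using hab
    rw [Int.card_Icc] at this
    rw [abs_of_nonpos hk]; omega

lemma axis_tail (D : Finset (ℤ × ℤ)) (hD : good D) (R y : ℤ) (hy : 0 ≤ y) (h : (R, (0 : ℤ)) ∈ D) :
    R - y + 1 ≤ tail D y := by
  have : (Finset.Icc y R).card ≤ tail D y := by
    apply Finset.card_le_card_of_injOn (fun j => (j, (0 : ℤ)))
    · intro j hj
      simp only [Finset.coe_Icc, Set.mem_Icc] at hj
      simpa [hj.1] using (hD _ h).2 j (Or.inl ⟨by omega, hj.2⟩)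
    · intro a _ b _ hab; simpa using hab
  rw [Int.card_Icc] at this
  omega

lemma reg_height (C : Finset (ℤ × ℤ)) (x k : ℤ) (h : (x, k) ∈ Reg C) : |k| ≤ colCnt C x := by
  have h1 := col_height _ h x k (Finset.mem_insert_self _ _)
  have h2 : colCnt (insert (x, k) C) x ≤ colCnt C x + 1 := by
    unfold colCnt
    rw [Finset.filter_insert]
    split_ifs
    · exact Finset.card_insert_le _ _
    · omega
  omega

lemma tail_insert (C : Finset (ℤ × ℤ)) (z : ℤ × ℤ) (hz : z ∉ C) (y : ℤ) :
    tail (insert z C) y = tail C y + if y ≤ z.1 then 1 else 0 := by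
  unfold tail
  rw [Finset.filter_insert]
  split_ifs
  · rw [Finset.card_insert_of_notMem]; simp [hz]
  · simp

lemma tail_mono {C D : Finset (ℤ × ℤ)} (h : C ⊆ D) (y : ℤ) : tail C y ≤ tail D y :=
  Finset.card_le_card (Finset.filter_subset_filter _ h)

open Classical in
lemma count_bad (C : Finset (ℤ × ℤ)) (y : ℤ) (v e L : ℕ) (hv : 1 ≤ v)
    (h : tail C y ≤ v ^ 3 * e) :
    Nat.count (fun n => L ≤ n ∨ v ^ 2 ≤ colCnt C (y + n)) L ≤ v * e := by
  rw [Nat.count_eq_card_filter_range]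
  set S := Finset.filter (fun n : ℕ => L ≤ n ∨ v ^ 2 ≤ colCnt C (y + n)) (Finset.range L)
  have h1 : S.card * v ^ 2 ≤ ∑ n ∈ S, colCnt C (y + n) := by
    rw [← smul_eq_mul]
    apply Finset.card_nsmul_le_sum
    intro n hn
    simp only [S, Finset.mem_filter, Finset.mem_range] at hn
    rcases hn.2 with h | h
    · omega
    · exact h
  have h2 : ∑ n ∈ S, colCnt C (y + n) ≤ tail C y := by
    unfold colCnt tail
    rw [← Finset.card_biUnion]
    · apply Finset.card_le_card
      intro z hz
      simp only [Finset.mem_biUnion, Finset.mem_filter] at hz ⊢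
      obtain ⟨n, _, h1, h2⟩ := hz
      exact ⟨h1, by omega⟩
    · intro a _ b _ hab
      rw [Function.onFun, Finset.disjoint_left]
      intro z hz hz'
      simp only [Finset.mem_filter] at hz hz'
      apply hab; omega
  have h3 : S.card * v ^ 2 ≤ (v * e) * v ^ 2 := by
    calc _ ≤ v ^ 3 * e := h1.trans (h2.trans h)
      _ = _ := by ring
  exact Nat.le_of_mul_le_mul_right h3 (by positivity)

noncomputable def Upot (t : ℕ → ℝ) (y : ℤ) (z : ℤ × ℤ) : ℝ :=
  if z.1 < y then 1
  else (1 + (pd t (z.1 - y).toNat).1 * (1 - |(z.2 : ℝ)| * t (z.1 - y).toNat)) / 2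

lemma Upot_super (t : ℕ → ℝ) (y : ℤ) (z : ℤ × ℤ) : avg (Upot t y) z ≤ Upot t y z := by
  obtain ⟨x, k⟩ := z
  unfold avg
  by_cases hk : k = 0
  · subst hk
    simp only [if_true, Upot]
    rcases lt_trichotomy x y with h | h | h
    · by_cases h' : x + 1 < y
      · simp [h, h', show x - 1 < y by omega]; norm_num
      · have : x + 1 - y = 0 := by omega
        simp [h, h', show x - 1 < y by omega, this, pd]; norm_num
    · subst h
      simp [pd]
      nlinarith
    · obtain ⟨n, hn⟩ : ∃ n : ℕ, x = y + n + 1 := ⟨(x - y - 1).toNat, by omega⟩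
      have e1 : (x - y).toNat = n + 1 := by omega
      have e2 : (x + 1 - y).toNat = n + 2 := by omega
      have e3 : (x - 1 - y).toNat = n := by omega
      have n1 : ¬ x < y := by omega
      have n2 : ¬ x + 1 < y := by omega
      have n3 : ¬ x - 1 < y := by omega
      simp only [n1, n2, n3, if_false, e1, e2, e3, pd]
      apply le_of_eq
      push_cast
      simp only [abs_neg, abs_one, abs_zero]
      ring
  · simp only [hk, if_false, Upot]
    split_ifs
    · norm_num
    · have : |((k + 1 : ℤ) : ℝ)| + |((k - 1 : ℤ) : ℝ)| = 2 * |(k : ℝ)| := by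
        have : |k + 1| + |k - 1| = 2 * |k| := by
          rcases lt_or_gt_of_ne hk with h | h
          · rw [abs_of_neg h, abs_of_nonpos (by omega), abs_of_neg (by omega)]; ring
          · rw [abs_of_pos h, abs_of_nonneg (by omega : 0 ≤ k - 1), abs_of_pos (by omega)]; ring
        exact_mod_cast this
      apply le_of_eq
      rw [← eq_sub_iff_add_eq] at this
      rw [this]; ring

lemma avg_quad (K η : ℝ) (hη : 0 ≤ η) (u : ℤ × ℤ → ℝ) (z : ℤ × ℤ) (h : avg u z ≤ u z) :
    avg (fun w => u w + 2 * η * (K - (w.2 : ℝ) ^ 2)) z + η ≤ u z + 2 * η * (K - (z.2 : ℝ) ^ 2) := by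
  unfold avg at h ⊢
  split_ifs at h ⊢ with hk
  · rw [hk]; push_cast; linarith
  · push_cast; linarith

open Classical in
noncomputable def Gw (y y' : ℤ) (M e : ℕ) (C : Finset (ℤ × ℤ)) : ℝ≥0∞ :=
  if M < tail C y then 0 else if good C then (2⁻¹) ^ (tail C y) * (2 ^ e) ^ (tail C y') else ⊤

lemma one_step (y : ℤ) (hy : 1 ≤ y) (v e M N T : ℕ) (hv : 1 ≤ v) (hM : M ≤ v ^ 3 * e)
    (η : ℝ) (hη : 0 ≤ η) (hT : 1 ≤ T * η) (C : Finset (ℤ × ℤ)) (hC : C.card ≤ N) :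
    val C (fun z => Gw y (y + (4 * v * e : ℕ)) M e (insert z C)) T (0, 0) ≤
      Gw y (y + (4 * v * e : ℕ)) M e C * ENNReal.ofReal (1 + 2 * η * (N : ℝ) ^ 2) := by
  classical
  set y' := y + (4 * v * e : ℕ) with hy'
  by_cases h1 : M < tail C y
  · have : ∀ z, Gw y y' M e (insert z C) = 0 := by
      intro z
      rw [Gw, if_pos (h1.trans_le (tail_mono (Finset.subset_insert _ _) y))]
    simp [val, this]
  by_cases h2 : good C
  swap
  · have : Gw y y' M e C = ⊤ := by rw [Gw, if_neg h1, if_neg h2]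
    rw [this, ENNReal.top_mul]
    · exact le_top
    · have : 0 < 1 + 2 * η * (N : ℝ) ^ 2 := by positivity
      simpa using this
  push Not at h1
  set L := 4 * v * e with hL
  set bad : ℕ → Prop := fun n => L ≤ n ∨ v ^ 2 ≤ colCnt C (y + n) with hbad
  set t : ℕ → ℝ := fun n => if bad n then 0 else 1 / (v : ℝ) ^ 2 with ht
  have ht0 : ∀ n, 0 ≤ t n := by intro n; simp only [ht]; split_ifs <;> positivity
  have hcount : Nat.count bad (2 * v * (2 * e)) ≤ v * e := by
    have := count_bad C y v e L hv (h1.trans hM)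
    rw [show 2 * v * (2 * e) = L by rw [hL]; ring]
    exact this
  have hgrow : (2 : ℝ) ^ e ≤ (pd t L).1 := by
    have := pd_growth bad v hv t (by rw [ht]; funext n; congr) (2 * e) e (by convert hcount)
    rw [show 2 * v * (2 * e) = L by rw [hL]; ring, two_mul, pow_add] at this
    exact le_of_mul_le_mul_right this (by positivity)
  have hv' : (1 : ℝ) ≤ v := by exact_mod_cast hv
  have hUlow : ∀ z ∈ Reg C, 1 / 2 ≤ Upot t y z := by
    rintro ⟨x, k⟩ hz
    unfold Upot
    split_ifs with hx
    · norm_num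
    · simp only at hx ⊢
      have hφ := (pd_pos t ht0 (x - y).toNat).1
      suffices |(k : ℝ)| * t (x - y).toNat ≤ 1 by nlinarith
      simp only [ht]
      split_ifs with hb
      · simp
      · simp only [hbad, not_or, not_le] at hb
        have h3 := reg_height C x k hz
        have h4 : y + ((x - y).toNat : ℤ) = x := by omega
        rw [h4] at hb
        have h5 : |k| ≤ (v ^ 2 : ℕ) := by have := hb.2; omega
        have h6 : |(k : ℝ)| ≤ (v : ℝ) ^ 2 := by exact_mod_cast h5
        rw [mul_one_div, div_le_one (by positivity)]
        exact h6
  have hg : ∀ z ∈ Reg C, 0 ≤ (N : ℝ) ^ 2 - (z.2 : ℝ) ^ 2 := by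
    rintro ⟨x, k⟩ hz
    have h3 := reg_height C x k hz
    have h4 : colCnt C x ≤ N := (Finset.card_filter_le _ _).trans hC
    have h5 : |k| ≤ (N : ℤ) := by omega
    have h6 : |(k : ℝ)| ≤ (N : ℝ) := by exact_mod_cast h5
    have := sq_le_sq' (by linarith [neg_abs_le (k : ℝ), abs_nonneg (k : ℝ)]) h6
    rw [sq_abs] at this
    simp only; linarith
  have key := val_bound C (fun z => Gw y y' M e (insert z C)) (Gw y y' M e C) (Reg C)
    (fun w => Upot t y w + 2 * η * ((N : ℝ) ^ 2 - (w.2 : ℝ) ^ 2)) η hη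
    (fun z hz => nbr_mem_Reg C h2 z hz)
    (fun w hw => by
      have := hUlow w hw; have := hg w hw
      have : 0 ≤ 2 * η * ((N : ℝ) ^ 2 - (w.2 : ℝ) ^ 2) := by positivity
      linarith)
    (fun z _ => avg_quad _ η hη _ z (Upot_super t y z))
    (fun z hz => by simp [Finset.insert_eq_of_mem hz])
    (fun z hz hzC => ?_) T 0 le_rfl (by simpa using hT) (0, 0) (zero_mem_Reg C h2)
  · simpa [Upot, show (0 : ℤ) < y by omega] using key
  · have hG : Gw y y' M e C = (2⁻¹) ^ (tail C y) * (2 ^ e) ^ (tail C y') := by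
      rw [Gw, if_neg (by omega), if_pos h2]
    by_cases hbig : M < tail (insert z C) y
    · rw [Gw, if_pos hbig]; exact zero_le
    have hz' : good (insert z C) := hz
    rw [Gw, if_neg hbig, if_pos hz', hG, tail_insert C z hzC, tail_insert C z hzC]
    have hq : 0 ≤ 2 * η * ((N : ℝ) ^ 2 - (z.2 : ℝ) ^ 2) := by
      have := hg z hz; positivity
    have hlow := hUlow z hz
    by_cases hx : y ≤ z.1
    · by_cases hx' : y' ≤ z.1
      · rw [if_pos hx, if_pos hx', pow_succ, pow_succ]
        have : (2⁻¹ : ℝ≥0∞) * 2 ^ e ≤ ENNReal.ofReal (Upot t y z + 2 * η * ((N : ℝ) ^ 2 - (z.2 : ℝ) ^ 2)) := by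
          have e1 : (2⁻¹ : ℝ≥0∞) * 2 ^ e = ENNReal.ofReal (2⁻¹ * 2 ^ e) := by
            rw [ENNReal.ofReal_mul (by norm_num), ENNReal.ofReal_pow (by norm_num),
              ENNReal.ofReal_inv_of_pos (by norm_num)]
            simp
          rw [e1]
          apply ENNReal.ofReal_le_ofReal
          have hn : L ≤ (z.1 - y).toNat := by omega
          have : t (z.1 - y).toNat = 0 := by simp only [ht, hbad]; rw [if_pos (Or.inl hn)]
          have hmm : (pd t L).1 ≤ (pd t (z.1 - y).toNat).1 := pd_mono t ht0 hn
          rw [Upot, if_neg (by omega), this]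
          linarith
        calc _ = (2⁻¹ : ℝ≥0∞) ^ (tail C y) * (2 ^ e) ^ (tail C y') * (2⁻¹ * 2 ^ e) := by ring
          _ ≤ _ := by gcongr
      · rw [if_pos hx, if_neg hx', pow_succ, Nat.add_zero]
        have : (2⁻¹ : ℝ≥0∞) ≤ ENNReal.ofReal (Upot t y z + 2 * η * ((N : ℝ) ^ 2 - (z.2 : ℝ) ^ 2)) := by
          have e1 : (2⁻¹ : ℝ≥0∞) = ENNReal.ofReal (2⁻¹) := by
            rw [ENNReal.ofReal_inv_of_pos (by norm_num)]
            simp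
          rw [e1]
          apply ENNReal.ofReal_le_ofReal
          linarith
        calc _ = (2⁻¹ : ℝ≥0∞) ^ (tail C y) * (2 ^ e) ^ (tail C y') * 2⁻¹ := by ring
          _ ≤ _ := by gcongr
    · have hx' : ¬ y' ≤ z.1 := by omega
      rw [if_neg hx, if_neg hx', Nat.add_zero, Nat.add_zero]
      have : (1 : ℝ≥0∞) ≤ ENNReal.ofReal (Upot t y z + 2 * η * ((N : ℝ) ^ 2 - (z.2 : ℝ) ^ 2)) := by
        rw [ENNReal.one_le_ofReal, Upot, if_pos (by omega)]; linarith
      calc _ = (2⁻¹ : ℝ≥0∞) ^ (tail C y) * (2 ^ e) ^ (tail C y') * 1 := by ring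
        _ ≤ _ := by gcongr

end CombT

namespace CombT

noncomputable def Ex (T k : ℕ) (G : Finset (ℤ × ℤ) → ℝ≥0∞) : ℝ≥0∞ :=
  ∑' p : Fin k → Fin (T + 1) → ℤ × ℤ, (∏ i, pathProb (0, 0) (p i)) * G (trClu T k p)

lemma Ex_succ (T k : ℕ) (G : Finset (ℤ × ℤ) → ℝ≥0∞) :
    Ex T (k + 1) G = ∑' p : Fin k → Fin (T + 1) → ℤ × ℤ, (∏ i, pathProb (0, 0) (p i)) *
      val (trClu T k p) (fun z => G (insert z (trClu T k p))) T (0, 0) := by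
  unfold Ex val
  have e := (Fin.snocEquiv (fun _ : Fin (k + 1) => Fin (T + 1) → ℤ × ℤ)).tsum_eq
    (fun p => (∏ i, pathProb (0, 0) (p i)) * G (trClu T (k + 1) p))
  rw [← e, ENNReal.tsum_prod (f := fun a q =>
    (fun p => (∏ i, pathProb (0, 0) (p i)) * G (trClu T (k + 1) p))
    ((Fin.snocEquiv (fun _ : Fin (k + 1) => Fin (T + 1) → ℤ × ℤ)) (a, q)))]
  rw [ENNReal.tsum_comm]
  congr 1; funext p
  rw [← ENNReal.tsum_mul_left]
  congr 1; funext q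
  simp [Fin.snocEquiv, Fin.prod_univ_castSucc, trClu]
  ring

lemma Ex_le (y : ℤ) (hy : 1 ≤ y) (v e M N T : ℕ) (hv : 1 ≤ v) (hM : M ≤ v ^ 3 * e)
    (η : ℝ) (hη : 0 ≤ η) (hT : 1 ≤ T * η) (k : ℕ) (hk : k ≤ N) :
    Ex T k (Gw y (y + (4 * v * e : ℕ)) M e) ≤ ENNReal.ofReal (1 + 2 * η * (N : ℝ) ^ 2) ^ k := by
  induction k with
  | zero =>
    rw [Ex, tsum_eq_single (fun i => i.elim0)]
    · simp [trClu, Gw, tail, good]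
    · intro p hp; exact absurd (Subsingleton.elim _ _) hp
  | succ k ih =>
    rw [Ex_succ, pow_succ]
    calc _ ≤ ∑' p : Fin k → Fin (T + 1) → ℤ × ℤ, (∏ i, pathProb (0, 0) (p i)) *
          (Gw y (y + (4 * v * e : ℕ)) M e (trClu T k p) *
            ENNReal.ofReal (1 + 2 * η * (N : ℝ) ^ 2)) := by
          apply ENNReal.tsum_le_tsum
          intro p
          gcongr
          exact one_step y hy v e M N T hv hM η hη hT _ ((trClu_card T k p).trans (by omega))
      _ = Ex T k (Gw y (y + (4 * v * e : ℕ)) M e) * ENNReal.ofReal (1 + 2 * η * (N : ℝ) ^ 2) := by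
          rw [Ex, ← ENNReal.tsum_mul_right]
          congr 1; funext p; ring
      _ ≤ _ := by gcongr; exact ih (by omega)

lemma prob_le {Ω : Type*} [MeasurableSpace Ω] (P : Measure Ω) (W : ℕ → ℕ → Ω → ℤ × ℤ)
    (hW : IsIIDCombWalks P W) (T N : ℕ) (Q : Finset (ℤ × ℤ) → Prop)
    (G : Finset (ℤ × ℤ) → ℝ≥0∞) (hG : ∀ C, C.card ≤ N → Q C → 1 ≤ G C) :
    P {ω | Q (trClu T N (fun i t => W i t ω))} ≤ Ex T N G := by
  classical
  set A : (Fin N → Fin (T + 1) → ℤ × ℤ) → Set Ω := fun p =>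
    if Q (trClu T N p) then {ω | ∀ i : Fin N, ∀ t : Fin (T + 1), W i t ω = p i t} else ∅ with hA
  have h1 : {ω | Q (trClu T N (fun i t => W i t ω))} ⊆ ⋃ p, A p := by
    intro ω hω
    rw [Set.mem_iUnion]
    refine ⟨fun i t => W i t ω, ?_⟩
    simp only [hA]
    have hω' : Q (trClu T N (fun i t => W i t ω)) := hω
    rw [if_pos hω']
    simp
  refine (measure_mono h1).trans ((measure_iUnion_le A).trans ?_)
  unfold Ex
  apply ENNReal.tsum_le_tsum
  intro p
  simp only [hA]
  split_ifs with h
  · rw [hW.2.2 N T p]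
    calc _ = (∏ i, pathProb (0, 0) (p i)) * 1 := by simp
      _ ≤ _ := by gcongr; exact hG _ (trClu_card T N p) h
  · simp

lemma stopF_exit (C : Finset (ℤ × ℤ)) (T : ℕ) (tr : ℕ → ℤ × ℤ) (n : ℕ) (hn : n ≤ T)
    (h1 : ∀ m < n, tr m ∈ C) (h2 : tr n ∉ C) : stopF C T (fun i => tr i) = tr n := by
  induction T generalizing tr n with
  | zero =>
    have : n = 0 := by omega
    subst this; simp [stopF]
  | succ T ih =>
    cases n with
    | zero => simp [stopF, h2]
    | succ n =>
      have h0 : tr 0 ∈ C := h1 0 (by omega)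
      simp only [stopF, Fin.val_zero, h0, if_true]
      exact ih (fun m => tr (m + 1)) n (by omega) (fun m hm => h1 (m + 1) (by omega)) h2

lemma stopF_stay (C : Finset (ℤ × ℤ)) (T : ℕ) (tr : ℕ → ℤ × ℤ) 
    (h1 : ∀ m, tr m ∈ C) : stopF C T (fun i => tr i) ∈ C := by
  induction T generalizing tr with
  | zero => simpa [stopF] using h1 0
  | succ T ih =>
    simp only [stopF, Fin.val_zero, h1 0, if_true]
    exact ih (fun m => tr (m + 1)) (fun m => h1 (m + 1))

lemma clu_eq (W : ℕ → ℕ → ℤ × ℤ) (k : ℕ) :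
    ∃ T0, ∀ T ≥ T0, dlaCluster W k = (trClu T k (fun i t => W i t) : Set (ℤ × ℤ)) := by
  induction k with
  | zero => exact ⟨0, fun T _ => by simp [dlaCluster, trClu]⟩
  | succ k ih =>
    obtain ⟨T0, hT0⟩ := ih
    by_cases h : ∃ n, W k n ∉ dlaCluster W k
    · obtain ⟨n, hn1, hn2, hs⟩ : ∃ n, (∀ m < n, W k m ∈ dlaCluster W k) ∧
          W k n ∉ dlaCluster W k ∧ settlePoint (dlaCluster W k) (W k) = W k n := by
        refine ⟨sInf {n | W k n ∉ dlaCluster W k}, fun m hm => ?_, Nat.sInf_mem h, rfl⟩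
        by_contra hc
        exact Nat.notMem_of_lt_sInf hm hc
      refine ⟨max T0 n, fun T hT => ?_⟩
      have e := hT0 T (le_trans (le_max_left _ _) hT)
      have hst : stopF (trClu T k (fun i t => W i t)) T (fun t => W k t) = W k n := by
        apply stopF_exit _ _ _ _ (le_trans (le_max_right _ _) hT)
        · intro m hm
          have := hn1 m hm
          rw [e] at this
          exact_mod_cast this
        · rw [e] at hn2
          exact_mod_cast hn2
      rw [dlaCluster, hs, trClu]
      simp only [Fin.val_castSucc, Fin.val_last]
      rw [hst, e, Finset.coe_insert, Set.union_singleton]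
    · push Not at h
      refine ⟨T0, fun T hT => ?_⟩
      have e := hT0 T hT
      have hs : settlePoint (dlaCluster W k) (W k) ∈ dlaCluster W k := h _
      have hst : stopF (trClu T k (fun i t => W i t)) T (fun t => W k t) ∈
          trClu T k (fun i t => W i t) := by
        apply stopF_stay
        intro m
        have := h m
        rw [e] at this
        exact_mod_cast this
      rw [dlaCluster, trClu]
      simp only [Fin.val_castSucc, Fin.val_last]
      rw [Finset.insert_eq_of_mem hst, Set.union_singleton, Set.insert_eq_of_mem hs, e]

lemma limit_bound {Ω : Type*} [MeasurableSpace Ω] (P : Measure Ω) (W : ℕ → ℕ → Ω → ℤ × ℤ)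
    (N : ℕ) (z : ℤ × ℤ) (b : ℝ≥0∞) (T1 : ℕ)
    (h : ∀ T ≥ T1, P {ω | z ∈ trClu T N (fun i t => W i t ω)} ≤ b) :
    P {ω | z ∈ dlaCluster (fun i t => W i t ω) N} ≤ b := by
  set F : ℕ → Set Ω := fun T0 => {ω | ∀ T ≥ T0, z ∈ trClu T N (fun i t => W i t ω)} with hF
  have h1 : {ω | z ∈ dlaCluster (fun i t => W i t ω) N} ⊆ ⋃ T0, F T0 := by
    intro ω hω
    obtain ⟨T0, hT0⟩ := clu_eq (fun i t => W i t ω) N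
    rw [Set.mem_iUnion]
    refine ⟨T0, fun T hT => ?_⟩
    have : z ∈ dlaCluster (fun i t => W i t ω) N := hω
    rw [hT0 T hT] at this
    exact_mod_cast this
  have hmono : Monotone F := fun a c hac ω hω T hT => hω T (le_trans hac hT)
  refine (measure_mono h1).trans ?_
  rw [hmono.measure_iUnion]
  apply iSup_le
  intro T0
  refine le_trans (measure_mono ?_) (h (max T0 T1) (le_max_right _ _))
  intro ω hω
  exact hω _ (le_max_left _ _)

end CombT

namespace CombT

lemma half_pow_mul (a b : ℕ) (h : a ≤ b) : (1 : ℝ≥0∞) ≤ (2⁻¹) ^ a * 2 ^ b := by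
  obtain ⟨c, rfl⟩ := Nat.exists_eq_add_of_le h
  rw [pow_add, ← mul_assoc, ← mul_pow, ENNReal.inv_mul_cancel (by norm_num) (by norm_num), one_pow,
    one_mul]
  exact one_le_pow₀ (by norm_num)

lemma pointwise (R : ℤ) (K N : ℕ) (hK : 1 ≤ K) (b : ℕ → ℤ) (M e : ℕ → ℕ)
    (hb0 : 0 ≤ b 0) (hR : (M 0 : ℤ) < R - b 0 + 1) (hN : N ≤ M K)
    (C : Finset (ℤ × ℤ)) (hC : C.card ≤ N) (hz : (R, (0 : ℤ)) ∈ C) :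
    1 ≤ ∑ j ∈ Finset.range K, Gw (b (j + 1)) (b j) (M (j + 1)) (e j) C *
      (2 ^ M (j + 1) * (2⁻¹) ^ (e j * M j)) := by
  classical
  have htop : ∀ y, tail C y ≤ M K := fun y => ((Finset.card_filter_le _ _).trans hC).trans hN
  by_cases hg : good C
  · have hex : ∃ j, tail C (b j) ≤ M j := ⟨K, htop _⟩
    have hfK : Nat.find hex ≤ K := Nat.find_le (htop _)
    have h0 : Nat.find hex ≠ 0 := by
      intro h
      have h1 := Nat.find_spec hex
      rw [h] at h1
      have := axis_tail C hg R (b 0) hb0 hz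
      omega
    obtain ⟨j, hj⟩ := Nat.exists_eq_succ_of_ne_zero h0
    have h1 := Nat.find_spec hex
    have h2 : ¬ tail C (b j) ≤ M j := Nat.find_min hex (by omega)
    rw [hj] at h1
    have hjK : j ∈ Finset.range K := Finset.mem_range.2 (by omega)
    refine le_trans ?_ (Finset.single_le_sum (f := fun j => Gw (b (j + 1)) (b j) (M (j + 1)) (e j) C *
      (2 ^ M (j + 1) * (2⁻¹) ^ (e j * M j))) (fun _ _ => zero_le) hjK)
    simp only [Nat.succ_eq_add_one] at h1 ⊢
    rw [Gw, if_neg (by omega), if_pos hg]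
    have a1 := half_pow_mul _ _ h1
    have a2 := half_pow_mul (e j * M j) (e j * tail C (b j)) (by gcongr; omega)
    calc (1 : ℝ≥0∞) = 1 * 1 := by simp
      _ ≤ _ := mul_le_mul' a1 a2
      _ = _ := by rw [← pow_mul]; ring
  · obtain ⟨j, rfl⟩ : ∃ j, K = j + 1 := ⟨K - 1, by omega⟩
    have hjK : j ∈ Finset.range (j + 1) := Finset.mem_range.2 (by omega)
    refine le_trans ?_ (Finset.single_le_sum (f := fun j => Gw (b (j + 1)) (b j) (M (j + 1)) (e j) C *
      (2 ^ M (j + 1) * (2⁻¹) ^ (e j * M j))) (fun _ _ => zero_le) hjK)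
    rw [Gw, if_neg (not_lt.2 (htop _)), if_neg hg, ENNReal.top_mul]
    · exact le_top
    · simp

lemma one_add_pow_le (N : ℕ) (hN : 1 ≤ N) :
    ENNReal.ofReal (1 + 2 * (1 / (4 * (N : ℝ) ^ 3)) * (N : ℝ) ^ 2) ^ N ≤ 2 := by
  have hN' : (1 : ℝ) ≤ N := by exact_mod_cast hN
  rw [← ENNReal.ofReal_pow (by positivity)]
  rw [show (2 : ℝ≥0∞) = ENNReal.ofReal 2 by simp]
  apply ENNReal.ofReal_le_ofReal
  have e1 : 1 + 2 * (1 / (4 * (N : ℝ) ^ 3)) * (N : ℝ) ^ 2 = 1 / (2 * N) + 1 := by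
    field_simp; ring
  rw [e1]
  calc (1 / (2 * (N : ℝ)) + 1) ^ N ≤ (Real.exp (1 / (2 * N))) ^ N := by
        gcongr; exact Real.add_one_le_exp _
    _ = Real.exp (1 / 2) := by
        rw [← Real.exp_nat_mul]; congr 1; field_simp
    _ ≤ 2 := by
        rw [← Real.le_log_iff_exp_le (by norm_num)]
        linarith [Real.log_two_gt_d9]

lemma multi_bound {Ω : Type*} [MeasurableSpace Ω] (P : Measure Ω) (W : ℕ → ℕ → Ω → ℤ × ℤ)
    (hW : IsIIDCombWalks P W)
    (R : ℤ) (K N : ℕ) (hK : 1 ≤ K) (hN1 : 1 ≤ N) (b : ℕ → ℤ) (M e v : ℕ → ℕ)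
    (hb : ∀ j, b j = b (j + 1) + (4 * v j * e j : ℕ)) (hb1 : ∀ j ≤ K, 1 ≤ b j)
    (hv : ∀ j, 1 ≤ v j) (hM : ∀ j, M (j + 1) ≤ v j ^ 3 * e j)
    (hR : (M 0 : ℤ) < R - b 0 + 1) (hN : N ≤ M K) :
    P {ω | (R, (0 : ℤ)) ∈ dlaCluster (fun i t => W i t ω) N} ≤
      ∑ j ∈ Finset.range K, 2 * (2 ^ M (j + 1) * (2⁻¹) ^ (e j * M j)) := by
  have hN' : (1 : ℝ) ≤ N := by exact_mod_cast hN1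
  apply limit_bound P W N _ _ (4 * N ^ 3)
  intro T hT
  refine (prob_le P W hW T N (fun C => (R, (0 : ℤ)) ∈ C) _
    (fun C hC hz => pointwise R K N hK b M e (by have := hb1 0 (by omega); omega) hR hN C hC hz)).trans ?_
  unfold Ex
  simp_rw [Finset.mul_sum]
  rw [Summable.tsum_finsetSum (fun _ _ => ENNReal.summable)]
  apply Finset.sum_le_sum
  intro j hj
  have hjK := Finset.mem_range.1 hj
  simp_rw [← mul_assoc]
  rw [ENNReal.tsum_mul_right, ENNReal.tsum_mul_right]
  gcongr
  have := Ex_le (b (j + 1)) (hb1 _ (by omega)) (v j) (e j) (M (j + 1)) N T (hv j) (hM j)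
    (1 / (4 * (N : ℝ) ^ 3)) (by positivity)
    (by
      rw [mul_one_div, le_div_iff₀ (by positivity), one_mul]
      exact_mod_cast hT) N le_rfl
  rw [← hb] at this
  exact this.trans (one_add_pow_le N hN1)

lemma geo_half (K : ℕ) : ∑ j ∈ Finset.range K, (2⁻¹ : ℝ≥0∞) ^ (j + 1) ≤ 1 := by
  have : ∑ j ∈ Finset.range K, (2⁻¹ : ℝ≥0∞) ^ (j + 1) + (2⁻¹) ^ K = 1 := by
    induction K with
    | zero => simp
    | succ K ih =>
      rw [Finset.sum_range_succ, add_assoc, pow_succ, ← mul_add, ENNReal.inv_two_add_inv_two, mul_one, ih]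
  rw [← this]; exact le_self_add

lemma numeric (m N R : ℕ) (hm : 200000 ≤ m) (hR : 2 * m ≤ R) (hN1 : 1 ≤ N)
    (hN : (N : ℝ) ≤ 27 / 10 ^ 17 * (m : ℝ) ^ 3)
    {Ω : Type*} [MeasurableSpace Ω] (P : Measure Ω) (W : ℕ → ℕ → Ω → ℤ × ℤ)
    (hW : IsIIDCombWalks P W) :
    P {ω | ((R : ℤ), (0 : ℤ)) ∈ dlaCluster (fun i t => W i t ω) N} ≤ (2⁻¹) ^ (m * m / 512) := by
  have hm' : (200000 : ℝ) ≤ m := by exact_mod_cast hm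
  -- cube root
  obtain ⟨r, hr1, hr2, hr3⟩ : ∃ r : ℕ, 1 ≤ r ∧ m ≤ r ^ 3 ∧ r ^ 3 ≤ 8 * m := by
    have hex : ∃ r : ℕ, m ≤ r ^ 3 := ⟨m, by nlinarith [Nat.le_self_pow (n := 3) (by norm_num) m]⟩
    classical
    have h1 := Nat.find_spec hex
    have h0 : Nat.find hex ≠ 0 := by intro h; rw [h] at h1; omega
    obtain ⟨s, hs⟩ := Nat.exists_eq_succ_of_ne_zero h0
    have h2 : ¬ m ≤ s ^ 3 := Nat.find_min hex (by omega)
    rw [hs, Nat.succ_eq_add_one] at h1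
    have hs1 : 1 ≤ s := by
      by_contra h; have : s = 0 := by omega
      subst this; omega
    refine ⟨s + 1, by omega, h1, ?_⟩
    have : (s + 1) ^ 3 ≤ (2 * s) ^ 3 := Nat.pow_le_pow_left (by omega) 3
    have e : (2 * s) ^ 3 = 8 * s ^ 3 := by ring
    omega
  obtain ⟨K, hK1, hK2, hK3⟩ : ∃ K : ℕ, 1 ≤ K ∧ N ≤ 8 ^ K * m ∧ 8 ^ K * m ≤ 64 * N + 8 * m := by
    have hex : ∃ K : ℕ, N ≤ 8 ^ K * m := by
      refine ⟨N, ?_⟩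
      have : N < 8 ^ N := Nat.lt_pow_self (by norm_num)
      nlinarith
    classical
    have h1 := Nat.find_spec hex
    rcases Nat.eq_zero_or_pos (Nat.find hex) with h | h
    · rw [h] at h1
      exact ⟨1, le_rfl, by omega, by omega⟩
    · have h2 : ¬ N ≤ 8 ^ (Nat.find hex - 1) * m := Nat.find_min hex (by omega)
      obtain ⟨s, hs⟩ := Nat.exists_eq_succ_of_ne_zero h.ne'
      rw [hs, Nat.succ_eq_add_one] at h1 h2
      simp only [Nat.add_sub_cancel] at h2
      refine ⟨s + 1, by omega, h1, ?_⟩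
      rw [pow_succ]; nlinarith
  set M : ℕ → ℕ := fun j => 8 ^ j * m with hMdef
  set q : ℕ → ℕ := fun j => m / (512 * 8 ^ j) with hq
  set e : ℕ → ℕ := fun j => 17 + q j with he
  set v : ℕ → ℕ := fun j => min (16 * 4 ^ j) (r * 2 ^ j) with hvdef
  set S : ℕ → ℕ := fun j => ∑ i ∈ Finset.range j, 4 * v i * e i with hS
  have hqlow : ∀ j, m ≤ 512 * 8 ^ j * (q j + 1) := fun j =>
    (Nat.lt_mul_div_succ m (by positivity)).le
  have hrK : 272 * ((r : ℝ) * 2 ^ K) ≤ m := by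
    have h3 : (272 * ((r : ℝ) * 2 ^ K)) ^ 3 ≤ (m : ℝ) ^ 3 := by
      have e8 : ((2 : ℝ) ^ K) ^ 3 = 8 ^ K := by
        rw [← pow_mul, mul_comm, pow_mul]; norm_num
      have a1 : (r : ℝ) ^ 3 ≤ 8 * m := by exact_mod_cast hr3
      have a2 : (8 : ℝ) ^ K * m ≤ 64 * N + 8 * m := by exact_mod_cast hK3
      calc (272 * ((r : ℝ) * 2 ^ K)) ^ 3 = 272 ^ 3 * (8 ^ K * (r : ℝ) ^ 3) := by
            rw [mul_pow, mul_pow, e8]; ring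
        _ ≤ 272 ^ 3 * (8 ^ K * (8 * (m : ℝ))) := by gcongr
        _ = 272 ^ 3 * 8 * (8 ^ K * (m : ℝ)) := by ring
        _ ≤ 272 ^ 3 * 8 * (64 * (27 / 10 ^ 17 * (m : ℝ) ^ 3) + 8 * (m : ℝ)) := by gcongr; linarith
        _ ≤ _ := by
          have : (200000 : ℝ) ^ 2 * m ≤ (m : ℝ) ^ 2 * m := by gcongr
          nlinarith
    exact le_of_pow_le_pow_left₀ (by norm_num) (by positivity) h3
  have hSb : ∀ j, (S j : ℝ) ≤ 68 * (r * 2 ^ j) + m / 4 * (1 - (1 / 2) ^ j) := by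
    intro j
    induction j with
    | zero => simp [hS]
    | succ j ih =>
      have e1 : S (j + 1) = S j + 4 * v j * e j := by simp [hS, Finset.sum_range_succ]
      have b1 : (v j : ℝ) ≤ r * 2 ^ j := by
        have : v j ≤ r * 2 ^ j := min_le_right _ _
        exact_mod_cast this
      have b2 : (v j : ℝ) ≤ 16 * 4 ^ j := by
        have : v j ≤ 16 * 4 ^ j := min_le_left _ _
        exact_mod_cast this
      have b3 : (q j : ℝ) ≤ m / (512 * 8 ^ j) := by
        have := Nat.cast_div_le (α := ℝ) (m := m) (n := 512 * 8 ^ j)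
        push_cast at this; exact this
      have b4 : (v j : ℝ) * q j ≤ m / 32 * (1 / 2) ^ j := by
        calc (v j : ℝ) * q j ≤ (16 * 4 ^ j) * (m / (512 * 8 ^ j)) := by gcongr
          _ = _ := by
            rw [show (8 : ℝ) = 4 * 2 by norm_num, mul_pow, one_div, inv_pow]
            field_simp; norm_num
      rw [e1]
      simp only [he]
      push_cast
      rw [pow_succ, pow_succ]
      nlinarith
  have hSK : ∀ j ≤ K, 2 * S j ≤ m := by
    intro j hj
    have h1 := hSb j
    have h2 : (2 : ℝ) ^ j ≤ 2 ^ K := pow_le_pow_right₀ (by norm_num) hj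
    have h3 : (r : ℝ) * 2 ^ j ≤ r * 2 ^ K := by gcongr
    have h4 : (m : ℝ) / 4 * (1 - (1 / 2) ^ j) ≤ m / 4 * 1 := by
      gcongr
      have : (0 : ℝ) < (1 / 2) ^ j := by positivity
      linarith
    have : (2 * S j : ℝ) ≤ m := by linarith
    exact_mod_cast this
  have main := multi_bound P W hW R K N hK1 hN1 (fun j => (R : ℤ) - m - S j) M e v
    (fun j => by
      have e1 : S (j + 1) = S j + 4 * v j * e j := by simp [hS, Finset.sum_range_succ]
      simp only [e1]; push_cast; ring)
    (fun j hj => by have := hSK j hj; omega)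
    (fun j => by
      simp only [hvdef]
      exact le_min (Nat.mul_pos (by norm_num) (by positivity)) (Nat.mul_pos hr1 (by positivity)))
    (fun j => by
      have e8 : (8 : ℕ) ^ j * 8 ^ j = 64 ^ j := by rw [← mul_pow]; norm_num
      have hql := hqlow j
      rcases min_choice (16 * 4 ^ j) (r * 2 ^ j) with h | h
      · simp only [hMdef, hvdef, he, h]
        have e4 : ((4 : ℕ) ^ j) ^ 3 = 8 ^ j * 8 ^ j := by
          rw [e8, ← pow_mul, mul_comm, pow_mul]; norm_num
        calc 8 ^ (j + 1) * m ≤ 8 ^ (j + 1) * (512 * 8 ^ j * (q j + 1)) := by gcongr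
          _ = 4096 * (8 ^ j * 8 ^ j) * (q j + 1) := by ring
          _ ≤ 4096 * (8 ^ j * 8 ^ j) * (17 + q j) := Nat.mul_le_mul_left _ (by omega)
          _ = _ := by rw [mul_pow, e4]; norm_num
      · simp only [hMdef, hvdef, he, h]
        have e2 : ((2 : ℕ) ^ j) ^ 3 = 8 ^ j := by
          rw [← pow_mul, mul_comm, pow_mul]; norm_num
        calc 8 ^ (j + 1) * m ≤ 8 ^ (j + 1) * r ^ 3 := by gcongr
          _ = r ^ 3 * 8 ^ j * 8 := by ring
          _ ≤ r ^ 3 * 8 ^ j * (17 + q j) := Nat.mul_le_mul_left _ (by omega)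
          _ = _ := by rw [mul_pow, e2])
    (by simp [hMdef, hS])
    hK2
  refine main.trans ?_
  have term : ∀ j, (2 : ℝ≥0∞) * (2 ^ M (j + 1) * (2⁻¹) ^ (e j * M j)) ≤
      (2⁻¹) ^ (m * m / 512) * (2⁻¹) ^ (j + 1) := by
    intro j
    have hexp : m * m / 512 + (j + 1) + (M (j + 1) + 1) ≤ e j * M j := by
      have h1 : m * m / 512 ≤ 8 ^ j * m * (q j + 1) := by
        apply Nat.div_le_of_le_mul
        calc m * m ≤ m * (512 * 8 ^ j * (q j + 1)) := Nat.mul_le_mul_left _ (hqlow j)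
          _ = _ := by ring
      have h2 : j < 8 ^ j := Nat.lt_pow_self (by norm_num)
      have h3 : M (j + 1) = 8 * (8 ^ j * m) := by simp only [hMdef]; ring
      have h4 : e j * M j = 8 ^ j * m * (q j + 1) + 16 * (8 ^ j * m) := by
        simp only [hMdef, he]; ring
      have h5 : 8 ^ j ≤ 8 ^ j * m := Nat.le_mul_of_pos_right _ (by omega)
      omega
    obtain ⟨c, hc⟩ := Nat.exists_eq_add_of_le hexp
    have hh : (2 : ℝ≥0∞) ^ (M (j + 1) + 1) * (2⁻¹) ^ (M (j + 1) + 1) = 1 := by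
      rw [← mul_pow, ENNReal.mul_inv_cancel (by norm_num) (by norm_num), one_pow]
    calc (2 : ℝ≥0∞) * (2 ^ M (j + 1) * (2⁻¹) ^ (e j * M j))
        = (2 ^ (M (j + 1) + 1) * (2⁻¹) ^ (M (j + 1) + 1)) *
          ((2⁻¹) ^ (m * m / 512) * (2⁻¹) ^ (j + 1)) * (2⁻¹) ^ c := by
          rw [hc]; ring
      _ ≤ 1 * ((2⁻¹) ^ (m * m / 512) * (2⁻¹) ^ (j + 1)) * 1 := by
          rw [hh]
          gcongr
          exact pow_le_one₀ zero_le (by norm_num)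
      _ = _ := by ring
  calc _ ≤ ∑ j ∈ Finset.range K, (2⁻¹ : ℝ≥0∞) ^ (m * m / 512) * (2⁻¹) ^ (j + 1) :=
        Finset.sum_le_sum fun j _ => term j
    _ = (2⁻¹) ^ (m * m / 512) * ∑ j ∈ Finset.range K, (2⁻¹ : ℝ≥0∞) ^ (j + 1) := by
        rw [Finset.mul_sum]
    _ ≤ (2⁻¹) ^ (m * m / 512) * 1 := by gcongr; exact geo_half K
    _ = _ := by simp

lemma final_exp (m R : ℕ) (hm : 200000 ≤ m) (hR : R ≤ 3 * m) :
    (2⁻¹ : ℝ≥0∞) ^ (m * m / 512) ≤ ENNReal.ofReal (Real.exp (-(1 / 100000) * (R : ℝ) ^ 2)) := by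
  have hm' : (200000 : ℝ) ≤ m := by exact_mod_cast hm
  have hR' : (R : ℝ) ≤ 3 * m := by exact_mod_cast hR
  have e1 : (2⁻¹ : ℝ≥0∞) = ENNReal.ofReal (2⁻¹) := by
    rw [ENNReal.ofReal_inv_of_pos (by norm_num)]
    simp
  rw [e1, ← ENNReal.ofReal_pow (by norm_num)]
  apply ENNReal.ofReal_le_ofReal
  have e2 : (2⁻¹ : ℝ) = Real.exp (-Real.log 2) := by
    rw [Real.exp_neg, Real.exp_log (by norm_num)]
  rw [e2, ← Real.exp_nat_mul]
  apply Real.exp_le_exp.2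
  have h1 : (m : ℝ) * m < 512 * ((m * m / 512 : ℕ) + 1) := by
    have := Nat.lt_mul_div_succ (m * m) (show 0 < 512 by norm_num)
    exact_mod_cast this
  have h2 : (R : ℝ) ^ 2 ≤ 9 * m ^ 2 := by nlinarith [(Nat.cast_nonneg R : (0 : ℝ) ≤ R)]
  have h3 := Real.log_two_gt_d9
  have h4 : (0 : ℝ) ≤ (m * m / 512 : ℕ) := Nat.cast_nonneg _
  have h5 : (1 / 2 : ℝ) * (m * m / 512 : ℕ) ≤ Real.log 2 * (m * m / 512 : ℕ) := by
    gcongr; linarith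
  nlinarith

end CombT

/-- **Corollary (large deviations for thin tentacles along the x-axis).**
There are `β, κ₂ > 0` such that if `d(n) < β R³` then
`P((R,0) ∈ A(n)) ≤ exp(−κ₂ R²)`. -/
theorem comb_idla_tentacle_bound :
    ∃ β κ₂ : ℝ, 0 < β ∧ 0 < κ₂ ∧
      ∀ R n : ℕ, (((combD n).ncard : ℝ) < β * (R : ℝ) ^ 3) →
        ∀ (Ω : Type*) [MeasurableSpace Ω] (P : Measure Ω) (W : ℕ → ℕ → Ω → ℤ × ℤ),
          IsIIDCombWalks P W →
          P {ω | (((R : ℤ), (0 : ℤ)) : ℤ × ℤ) ∈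
              dlaCluster (fun i t => W i t ω) ((combD n).ncard)} ≤
            ENNReal.ofReal (Real.exp (-κ₂ * (R : ℝ) ^ 2)) := by
  refine ⟨1 / 10 ^ 17, 1 / 100000, by norm_num, by norm_num, ?_⟩
  intro R n hd Ω _ P W hW
  generalize (combD n).ncard = N at hd ⊢
  rcases Nat.eq_zero_or_pos N with h0 | hpos
  · subst h0
    simp [dlaCluster]
  · have hN1 : (1 : ℝ) ≤ N := by exact_mod_cast hpos
    have hRbig : 400002 ≤ R := by
      by_contra h
      push Not at h
      have h1 : (R : ℝ) ≤ 400002 := by exact_mod_cast h.le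
      have h2 : (R : ℝ) ^ 3 ≤ 400002 ^ 3 := by gcongr
      norm_num at h2 hd
      linarith
    have hm : 200000 ≤ R / 2 := by omega
    refine (CombT.numeric (R / 2) N R hm (by omega) hpos ?_ P W hW).trans
      (CombT.final_exp (R / 2) R hm (by omega))
    have h3 : (R : ℝ) ≤ 3 * (R / 2 : ℕ) := by
      have : R ≤ 3 * (R / 2) := by omega
      exact_mod_cast this
    have h4 : (R : ℝ) ^ 3 ≤ (3 * (R / 2 : ℕ)) ^ 3 := by gcongr
    calc (N : ℝ) ≤ 1 / 10 ^ 17 * (R : ℝ) ^ 3 := hd.le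
      _ ≤ 1 / 10 ^ 17 * (3 * (R / 2 : ℕ)) ^ 3 := by gcongr
      _ = _ := by ring
end

section
/- There is a constant κ_a>0, independent of ρ, such that for any real ρ>0 and any integer x with |x| ≤ ρ, the simple random walk on the comb started at the origin satisfies P_0( H({(x,0)}) < ℰ(ρ) ) ≥ κ_a·((ρ−|x|)/ρ)². -/
open MeasureTheory ENNReal
open scoped Pointwise

namespace CombAux

noncomputable def nbr (z : ℤ × ℤ) : Finset (ℤ × ℤ) :=
  if z.2 = 0 then {(z.1 + 1, 0), (z.1 - 1, 0), (z.1, 1), (z.1, -1)}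
  else {(z.1, z.2 + 1), (z.1, z.2 - 1)}

lemma stepProb_nbr (z w : ℤ × ℤ) (h : w ∈ nbr z) :
    (stepProb z w).toReal = 1 / (combDeg z : ℝ) := by
  obtain ⟨y, k⟩ := z
  have : combAdj (y, k) w := by
    unfold nbr at h
    unfold combAdj
    split_ifs at h with h0
    · simp only at h0
      simp only [Finset.mem_insert, Finset.mem_singleton] at h
      rcases h with rfl | rfl | rfl | rfl <;> simp [h0]
    · simp only [Finset.mem_insert, Finset.mem_singleton] at h
      rcases h with rfl | rfl <;> simp
  simp [stepProb, this]

/-- prefix event -/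
def pre {Ω : Type*} (S : ℕ → Ω → ℤ × ℤ) (p : ℕ → ℤ × ℤ) (k : ℕ) : Set Ω :=
  {ω | ∀ i ≤ k, S i ω = p i}

lemma pre_prob {Ω : Type*} [MeasurableSpace Ω] {P : Measure Ω} {S : ℕ → Ω → ℤ × ℤ}
    {v : ℤ × ℤ} (hS : IsCombWalk P S v) (p : ℕ → ℤ × ℤ) (k : ℕ) :
    P (pre S p k) = (if p 0 = v then 1 else 0) *
      ∏ i ∈ Finset.range k, stepProb (p i) (p (i + 1)) := by
  have h := hS.2.2 k (fun i => p i)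
  have e : pre S p k = {ω | ∀ i : Fin (k + 1), S i ω = p i} := by
    ext ω
    constructor
    · intro h i
      exact h i (Nat.lt_succ_iff.mp i.2)
    · intro h i hi
      exact h ⟨i, Nat.lt_succ_of_le hi⟩
  rw [e, h, pathProb, Finset.prod_range]
  rfl

lemma pre_succ {Ω : Type*} [MeasurableSpace Ω] {P : Measure Ω} {S : ℕ → Ω → ℤ × ℤ}
    {v : ℤ × ℤ} (hS : IsCombWalk P S v) (p : ℕ → ℤ × ℤ) (k : ℕ) (w : ℤ × ℤ) :
    P (pre S (Function.update p (k + 1) w) (k + 1)) = P (pre S p k) * stepProb (p k) w := by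
  rw [pre_prob hS, pre_prob hS, Finset.prod_range_succ, mul_assoc]
  have e1 : ∏ i ∈ Finset.range k, stepProb (Function.update p (k + 1) w i)
      (Function.update p (k + 1) w (i + 1)) =
      ∏ i ∈ Finset.range k, stepProb (p i) (p (i + 1)) := by
    apply Finset.prod_congr rfl
    intro i hi
    have := Finset.mem_range.mp hi
    rw [Function.update_of_ne (by omega), Function.update_of_ne (by omega)]
  rw [e1, Function.update_self, Function.update_of_ne (by omega : k ≠ k + 1),
    Function.update_of_ne (by omega : 0 ≠ k + 1)]

lemma pre_meas {Ω : Type*} [MeasurableSpace Ω] {P : Measure Ω} {S : ℕ → Ω → ℤ × ℤ}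
    {v : ℤ × ℤ} (hS : IsCombWalk P S v) (p : ℕ → ℤ × ℤ) (k : ℕ) :
    MeasurableSet (pre S p k) := by
  have : pre S p k = ⋂ i, ⋂ (_ : i ≤ k), (S i) ⁻¹' {p i} := by
    ext ω; simp [pre]
  rw [this]
  exact MeasurableSet.iInter fun i => MeasurableSet.iInter fun _ =>
    hS.2.1 i (measurableSet_singleton _)

open Classical in
/-- value iteration -/
noncomputable def val (D : Set (ℤ × ℤ)) (a : ℤ × ℤ) : ℕ → ℤ × ℤ → ℝ
  | 0 => fun z => if z = a then 1 else 0
  | n + 1 => fun z => if z = a then 1 else if z ∈ D then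
      ∑ w ∈ nbr z, 1 / (combDeg z : ℝ) * val D a n w else 0

lemma hit_lt (D : Set (ℤ × ℤ)) (a : ℤ × ℤ) (tr : ℕ → ℤ × ℤ) (k : ℕ)
    (h1 : tr k = a) (h2 : ∀ i ≤ k, tr i ∈ D) : hitTime {a} tr < hitTime Dᶜ tr := by
  have h3 : hitTime {a} tr ≤ k := iInf₂_le k (by simp [h1])
  have h4 : ((k + 1 : ℕ) : ℕ∞) ≤ hitTime Dᶜ tr := by
    refine le_iInf₂ fun m hm => ?_
    by_contra hc
    have : m ≤ k := by
      have : m < k + 1 := by exact_mod_cast not_le.mp hc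
      omega
    exact hm (h2 m this)
  refine h3.trans_lt (lt_of_lt_of_le ?_ h4)
  exact_mod_cast Nat.lt_succ_self k

lemma val_le {Ω : Type*} [MeasurableSpace Ω] {P : Measure Ω} {S : ℕ → Ω → ℤ × ℤ}
    {v : ℤ × ℤ} (hS : IsCombWalk P S v) (D : Set (ℤ × ℤ)) (a : ℤ × ℤ) (ha : a ∈ D) (n : ℕ) :
    ∀ (k : ℕ) (p : ℕ → ℤ × ℤ), (∀ i < k, p i ∈ D) →
      P.real (pre S p k) * val D a n (p k) ≤
        (P.restrict {ω | hitTime {a} (fun t => S t ω) < hitTime Dᶜ (fun t => S t ω)}).real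
          (pre S p k) := by
  haveI := hS.1
  set A := {ω | hitTime {a} (fun t => S t ω) < hitTime Dᶜ (fun t => S t ω)} with hA
  have hit : ∀ (k : ℕ) (p : ℕ → ℤ × ℤ), (∀ i < k, p i ∈ D) → p k = a →
      P.real (pre S p k) ≤ (P.restrict A).real (pre S p k) := by
    intro k p hp hk
    rw [measureReal_restrict_apply (pre_meas hS p k), Set.inter_eq_left.mpr]
    intro ω hω
    refine hit_lt D a _ k ((hω k le_rfl).trans hk) fun i hi => ?_
    show S i ω ∈ D
    rw [hω i hi]
    rcases hi.lt_or_eq with h | h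
    · exact hp i h
    · rw [h, hk]; exact ha
  induction n with
  | zero =>
    intro k p hp
    by_cases hk : p k = a
    · simpa [val, hk] using hit k p hp hk
    · simp [val, hk]
  | succ n ih =>
    intro k p hp
    by_cases hk : p k = a
    · simpa [val, hk] using hit k p hp hk
    by_cases hD : p k ∈ D
    swap
    · simp [val, hk, hD]
    simp only [val, hk, hD, if_true, if_false]
    rw [Finset.mul_sum]
    set B : ℤ × ℤ → Set Ω := fun w => pre S (Function.update p (k + 1) w) (k + 1) with hB
    calc _ ≤ ∑ w ∈ nbr (p k), (P.restrict A).real (B w) := by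
          apply Finset.sum_le_sum
          intro w hw
          have := ih (k + 1) (Function.update p (k + 1) w) (by
            intro i hi
            rw [Function.update_of_ne (by omega)]
            rcases (Nat.lt_succ_iff.mp hi).lt_or_eq with h | h
            · exact hp i h
            · rw [h]; exact hD)
          rw [Function.update_self] at this
          refine le_trans (le_of_eq ?_) this
          rw [measureReal_def, measureReal_def, pre_succ hS, ENNReal.toReal_mul,
            stepProb_nbr _ _ hw]
          ring
      _ = (P.restrict A).real (⋃ w ∈ nbr (p k), B w) := by
          rw [measureReal_biUnion_finset]
          · intro w _ w' _ hne
            refine Set.disjoint_left.mpr fun ω h1 h2 => hne ?_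
            have e1 := h1 (k + 1) le_rfl
            have e2 := h2 (k + 1) le_rfl
            rw [Function.update_self] at e1 e2
            exact e1.symm.trans e2
          · intro w _
            exact pre_meas hS _ _
      _ ≤ _ := by
          refine measureReal_mono ?_ (measure_ne_top _ _)
          intro ω hω
          simp only [Set.mem_iUnion] at hω
          obtain ⟨w, _, hw⟩ := hω
          intro i hi
          have := hw i (by omega)
          rwa [Function.update_of_ne (by omega)] at this

lemma val_zero_le {Ω : Type*} [MeasurableSpace Ω] {P : Measure Ω} {S : ℕ → Ω → ℤ × ℤ}
    {v : ℤ × ℤ} (hS : IsCombWalk P S v) (D : Set (ℤ × ℤ)) (a : ℤ × ℤ) (ha : a ∈ D) (n : ℕ) :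
    ENNReal.ofReal (val D a n v) ≤
      P {ω | hitTime {a} (fun t => S t ω) < hitTime Dᶜ (fun t => S t ω)} := by
  haveI := hS.1
  have h := val_le hS D a ha n 0 (fun _ => v) (by simp)
  have h1 : P.real (pre S (fun _ => v) 0) = 1 := by
    rw [measureReal_def, pre_prob hS]; simp
  rw [h1, one_mul] at h
  refine (ENNReal.ofReal_le_ofReal h).trans ?_
  rw [ofReal_measureReal]
  refine (measure_mono (Set.subset_univ _)).trans ?_
  simp

/-- comparison -/
lemma comparison (D : Set (ℤ × ℤ)) (a : ℤ × ℤ) (g : ℤ × ℤ → ℝ) (C M ε : ℝ) (hε : 0 < ε)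
    (hC : 0 ≤ C) (hgC : ∀ z, g z ≤ C) (hout : ∀ z, z ∉ D → g z ≤ 0)
    (hM : ∀ z ∈ D, ∀ w ∈ nbr z, ((w.1 : ℝ) ^ 2 + (w.2 : ℝ) ^ 2) ≤ M)
    (hsub : ∀ z ∈ D, z ≠ a → g z ≤ ∑ w ∈ nbr z, 1 / (combDeg z : ℝ) * g w) (n : ℕ) :
    ∀ z : ℤ × ℤ, ((z.1 : ℝ) ^ 2 + (z.2 : ℝ) ^ 2) ≤ M →
      g z + ε * (((z.1 : ℝ) ^ 2 + (z.2 : ℝ) ^ 2) - M) + min 0 (n * ε - C) ≤ C * val D a n z := by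
  have hq : ∀ (f : ℤ × ℤ → ℝ) (c : ℝ) z, ∑ w ∈ nbr z, 1 / (combDeg z : ℝ) *
      (f w + ε * (((w.1 : ℝ) ^ 2 + (w.2 : ℝ) ^ 2) - M) + c) =
      (∑ w ∈ nbr z, 1 / (combDeg z : ℝ) * f w) +
      ε * (((z.1 : ℝ) ^ 2 + (z.2 : ℝ) ^ 2) - M) + ε + c := by
    rintro f c ⟨y, h⟩
    by_cases h0 : h = 0
    · subst h0
      simp only [nbr, combDeg, if_true]
      repeat rw [Finset.sum_insert (by simp <;> omega)]
      repeat rw [Finset.sum_insert (by simp <;> omega)]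
      simp only [Finset.sum_singleton]
      push_cast
      ring
    · simp only [nbr, combDeg, if_neg h0]
      repeat rw [Finset.sum_insert (by simp <;> omega)]
      simp only [Finset.sum_singleton]
      push_cast
      ring
  induction n with
  | zero =>
    intro z hz
    have h1 : 0 ≤ C * val D a 0 z := by
      apply mul_nonneg hC
      simp only [val]; split_ifs <;> norm_num
    have h2 : ε * (((z.1 : ℝ) ^ 2 + (z.2 : ℝ) ^ 2) - M) ≤ 0 :=
      mul_nonpos_of_nonneg_of_nonpos hε.le (by linarith)
    have h3 : min 0 (((0 : ℕ) : ℝ) * ε - C) ≤ -C := by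
      refine (min_le_right _ _).trans ?_
      simp
    linarith [hgC z]
  | succ n ih =>
    intro z hz
    have h2 : ε * (((z.1 : ℝ) ^ 2 + (z.2 : ℝ) ^ 2) - M) ≤ 0 :=
      mul_nonpos_of_nonneg_of_nonpos hε.le (by linarith)
    have h3 : min 0 (((n + 1 : ℕ) : ℝ) * ε - C) ≤ 0 := min_le_left _ _
    by_cases hk : z = a
    · simp only [val, hk, if_true, mul_one]
      rw [← hk]
      linarith [hgC z]
    by_cases hD : z ∈ D
    swap
    · simp only [val, hk, hD, if_false, mul_zero]
      linarith [hout z hD]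
    simp only [val, hk, hD, if_true, if_false]
    have h4 : min 0 (((n + 1 : ℕ) : ℝ) * ε - C) ≤ ε + min 0 ((n : ℝ) * ε - C) := by
      push_cast
      rcases le_total 0 ((n : ℝ) * ε - C) with h | h
      · rw [min_eq_left h]
        exact (min_le_left _ _).trans (by linarith)
      · rw [min_eq_right h]
        exact (min_le_right _ _).trans (by linarith)
    calc _ ≤ (∑ w ∈ nbr z, 1 / (combDeg z : ℝ) * g w) +
      ε * (((z.1 : ℝ) ^ 2 + (z.2 : ℝ) ^ 2) - M) + ε + min 0 ((n : ℝ) * ε - C) := by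
          linarith [hsub z hD hk]
      _ = _ := (hq g _ z).symm
      _ ≤ ∑ w ∈ nbr z, 1 / (combDeg z : ℝ) * (C * val D a n w) := by
          apply Finset.sum_le_sum
          intro w hw
          exact mul_le_mul_of_nonneg_left (ih w (hM z hD w hw)) (by positivity)
      _ = _ := by
          rw [Finset.mul_sum]
          exact Finset.sum_congr rfl fun w _ => by ring

noncomputable def G (ρ : ℝ) (X t : ℤ) : ℝ :=
  if X < t then 0 else if 0 < t then ρ ^ 5 / (ρ - t) ^ 2 - (ρ - t) ^ 3 / 2
  else (max (ρ + t) 0) ^ 3 / 2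

lemma G_pos {ρ : ℝ} (hρ : 0 < ρ) {X t : ℤ} (h0 : 0 ≤ t) (h1 : t ≤ X) :
    G ρ X t = ρ ^ 5 / (ρ - t) ^ 2 - (ρ - t) ^ 3 / 2 := by
  unfold G
  rw [if_neg (by omega)]
  split_ifs with h
  · rfl
  · have : t = 0 := by omega
    subst this
    simp only [Int.cast_zero, add_zero, sub_zero]
    rw [max_eq_left hρ.le]
    field_simp
    ring

lemma G_neg {ρ : ℝ} {X t : ℤ} (hX : 0 < X) (h0 : t ≤ 0) :
    G ρ X t = (max (ρ + t) 0) ^ 3 / 2 := by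
  unfold G
  rw [if_neg (by omega), if_neg (by omega)]

lemma G_nonneg {ρ : ℝ} (hρ : 0 < ρ) {X : ℤ} (hX : 0 < X) (hXρ : (X : ℝ) < ρ) (t : ℤ) :
    0 ≤ G ρ X t := by
  by_cases h1 : X < t
  · simp [G, h1]
  by_cases h0 : t ≤ 0
  · rw [G_neg hX h0]; positivity
  rw [G_pos hρ (by omega) (by omega)]
  have ht : (0 : ℝ) ≤ t := by exact_mod_cast (by omega : 0 ≤ t)
  have htX : (t : ℝ) ≤ X := by exact_mod_cast (by omega : t ≤ X)
  have ha : 0 < ρ - t := by linarith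
  rw [sub_nonneg, le_div_iff₀ (by positivity)]
  have : (ρ - t) ^ 5 ≤ ρ ^ 5 := pow_le_pow_left₀ ha.le (by linarith) 5
  have h5 : 0 ≤ (ρ - t) ^ 5 := by positivity
  nlinarith

lemma G_le {ρ : ℝ} (hρ : 0 < ρ) {X : ℤ} (hX : 0 < X) (hXρ : (X : ℝ) < ρ) (t : ℤ) :
    G ρ X t ≤ ρ ^ 5 / (ρ - X) ^ 2 := by
  have hX' : (0 : ℝ) < X := by exact_mod_cast hX
  have hc : 0 < ρ - X := by linarith
  by_cases h1 : X < t
  · simp only [G, h1, if_true]; positivity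
  by_cases h0 : t ≤ 0
  · rw [G_neg hX h0]
    have ht : (t : ℝ) ≤ 0 := by exact_mod_cast h0
    have : (max (ρ + t) 0) ^ 3 ≤ ρ ^ 3 :=
      pow_le_pow_left₀ (le_max_right _ _) (max_le (by linarith) hρ.le) 3
    have h3 : ρ ^ 3 ≤ ρ ^ 5 / (ρ - X) ^ 2 := by
      rw [le_div_iff₀ (by positivity)]
      have : (ρ - X) ^ 2 ≤ ρ ^ 2 := pow_le_pow_left₀ hc.le (by linarith) 2
      calc ρ ^ 3 * (ρ - X) ^ 2 ≤ ρ ^ 3 * ρ ^ 2 := by gcongr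
        _ = _ := by ring
    have : 0 < ρ ^ 3 := by positivity
    linarith
  rw [G_pos hρ (by omega) (by omega)]
  have htX : (t : ℝ) ≤ X := by exact_mod_cast (by omega : t ≤ X)
  have ha : 0 < ρ - t := by linarith
  have : ρ ^ 5 / (ρ - t) ^ 2 ≤ ρ ^ 5 / (ρ - X) ^ 2 := by gcongr
  have : 0 < (ρ - t) ^ 3 := by positivity
  linarith

lemma inv_ineq {a : ℝ} (ha : 1 < a) :
    2 * (1 / a ^ 2) * (1 + 3 / a ^ 2) ≤ 1 / (a - 1) ^ 2 + 1 / (a + 1) ^ 2 := by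
  have h1 : 0 < a - 1 := by linarith
  have h2 : 0 < a + 1 := by linarith
  have h0 : 0 < a := by linarith
  have e1 : 2 * (1 / a ^ 2) * (1 + 3 / a ^ 2) = (2 * a ^ 2 + 6) / a ^ 4 := by
    field_simp; ring
  have e2 : 1 / (a - 1) ^ 2 + 1 / (a + 1) ^ 2 = (2 * a ^ 2 + 2) / ((a - 1) ^ 2 * (a + 1) ^ 2) := by
    field_simp; ring
  rw [e1, e2, div_le_div_iff₀ (by positivity) (by positivity)]
  nlinarith

lemma G_sub {ρ : ℝ} (hρ : 0 < ρ) {X : ℤ} (hX : 0 < X) (hXρ : (X : ℝ) < ρ) (t : ℤ)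
    (ht : |(t : ℝ)| < ρ) (htX : t ≠ X) :
    2 * G ρ X t * (1 + 3 / (ρ - |(t : ℝ)|) ^ 2) ≤ G ρ X (t + 1) + G ρ X (t - 1) := by
  by_cases h1 : X < t
  · have := G_nonneg hρ hX hXρ (t + 1)
    have := G_nonneg hρ hX hXρ (t - 1)
    have e : G ρ X t = 0 := by simp [G, h1]
    rw [e]; linarith
  have htX' : t + 1 ≤ X := by omega
  rcases lt_trichotomy t 0 with h0 | h0 | h0
  · have hc : (t : ℝ) < 0 := by exact_mod_cast h0
    rw [G_neg hX h0.le, G_neg hX (by omega), G_neg hX (by omega)]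
    rw [abs_of_neg hc] at ht ⊢
    have hb : 0 < ρ + t := by linarith
    push_cast
    rw [max_eq_left hb.le, max_eq_left (by linarith)]
    have h3 : (ρ + t - 1) ^ 3 ≤ (max (ρ + (t - 1)) 0) ^ 3 := by
      rcases le_total 0 (ρ + (t - 1 : ℝ)) with h | h
      · rw [max_eq_left h]; apply le_of_eq; ring
      · rw [max_eq_right h]
        have : (ρ + t - 1) ^ 3 ≤ 0 := Odd.pow_nonpos (by decide) (by linarith)
        simpa using this
    have e : 2 * ((ρ + t) ^ 3 / 2) * (1 + 3 / (ρ - -(t : ℝ)) ^ 2) = (ρ + t) ^ 3 + 3 * (ρ + t) := by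
      rw [sub_neg_eq_add]; field_simp
    rw [e]
    nlinarith
  · subst h0
    have hX1 : (1 : ℝ) ≤ X := by exact_mod_cast (by omega : 1 ≤ X)
    have hr : 0 < ρ - 1 := by linarith
    rw [G_neg hX le_rfl, G_pos hρ (by omega) htX', G_neg hX (by omega)]
    push_cast
    rw [add_zero, abs_zero, sub_zero, max_eq_left hρ.le,
      max_eq_left (by linarith)]
    have e : 2 * (ρ ^ 3 / 2) * (1 + 3 / ρ ^ 2) = ρ ^ 3 + 3 * ρ := by field_simp
    have h5 : ρ ^ 3 + 3 * ρ ≤ ρ ^ 5 / (ρ - 1) ^ 2 := by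
      rw [le_div_iff₀ (by positivity)]
      have : 0 ≤ ρ ^ 3 := by positivity
      nlinarith [mul_pos hρ hr, mul_pos hρ (mul_pos hρ hr), mul_pos (mul_pos hρ hρ) (mul_pos hρ hr)]
    rw [e]
    have : (ρ + -1) ^ 3 = (ρ - 1) ^ 3 := by ring
    rw [this]
    linarith
  · have hc : (0 : ℝ) < t := by exact_mod_cast h0
    have hX1 : (t : ℝ) + 1 ≤ X := by exact_mod_cast htX'
    rw [G_pos hρ h0.le (by omega), G_pos hρ (by omega) htX', G_pos hρ (by omega) (by omega)]
    rw [abs_of_pos hc]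
    push_cast
    obtain ⟨a, ha⟩ : ∃ a, a = ρ - (t : ℝ) := ⟨_, rfl⟩
    have ha1 : 1 < a := by linarith
    have e1 : ρ - ((t : ℝ) + 1) = a - 1 := by linarith
    have e2 : ρ - ((t : ℝ) - 1) = a + 1 := by linarith
    rw [e1, e2, ← ha]
    have h := mul_le_mul_of_nonneg_left (inv_ineq ha1) (pow_pos hρ 5).le
    have e : 2 * (ρ ^ 5 / a ^ 2 - a ^ 3 / 2) * (1 + 3 / a ^ 2) =
        ρ ^ 5 * (2 * (1 / a ^ 2) * (1 + 3 / a ^ 2)) - (a ^ 3 + 3 * a) := by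
      have : a ≠ 0 := by linarith
      field_simp
    have e' : ρ ^ 5 * (1 / (a - 1) ^ 2 + 1 / (a + 1) ^ 2) =
      ρ ^ 5 / (a - 1) ^ 2 + ρ ^ 5 / (a + 1) ^ 2 := by ring
    rw [e' ] at h
    rw [e]
    have e'' : (a - 1) ^ 3 / 2 + (a + 1) ^ 3 / 2 = a ^ 3 + 3 * a := by ring
    linarith

noncomputable def gg (ρ : ℝ) (X s : ℤ) (z : ℤ × ℤ) : ℝ :=
  G ρ X (s * z.1) * max 0 (1 - 3 / (ρ - |(z.1 : ℝ)|) ^ 2 * |(z.2 : ℝ)|)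

lemma tooth (c : ℝ) (h : ℤ) (h0 : h ≠ 0) :
    2 * max 0 (1 - c * |(h : ℝ)|) ≤
      max 0 (1 - c * |((h + 1 : ℤ) : ℝ)|) + max 0 (1 - c * |((h - 1 : ℤ) : ℝ)|) := by
  have e : |((h + 1 : ℤ) : ℝ)| + |((h - 1 : ℤ) : ℝ)| = 2 * |(h : ℝ)| := by
    have : |h + 1| + |h - 1| = 2 * |h| := by
      rcases lt_or_gt_of_ne h0 with h1 | h1
      · rw [abs_of_nonpos (by omega), abs_of_nonpos (by omega), abs_of_neg h1]; ring
      · rw [abs_of_nonneg (by omega), abs_of_nonneg (by omega), abs_of_pos h1]; ring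
    exact_mod_cast this
  have e2 : c * |((h + 1 : ℤ) : ℝ)| + c * |((h - 1 : ℤ) : ℝ)| = 2 * (c * |(h : ℝ)|) := by
    rw [← mul_add, e]; ring
  have a1 := le_max_left 0 (1 - c * |((h + 1 : ℤ) : ℝ)|)
  have a2 := le_max_right 0 (1 - c * |((h + 1 : ℤ) : ℝ)|)
  have b1 := le_max_left 0 (1 - c * |((h - 1 : ℤ) : ℝ)|)
  have b2 := le_max_right 0 (1 - c * |((h - 1 : ℤ) : ℝ)|)
  rcases max_choice 0 (1 - c * |(h : ℝ)|) with h | h <;> rw [h] <;> linarith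

lemma main_bound {ρ : ℝ} (hρ : 0 < ρ) {X s : ℤ} (hs : s = 1 ∨ s = -1) (hX : 0 < X)
    (hXρ : (X : ℝ) < ρ) (δ : ℝ) (hδ : 0 < δ) :
    ∃ n, ((ρ - X) / ρ) ^ 2 / 2 - δ ≤ val (combD ρ) (s * X, 0) n (0, 0) := by
  have hss : s * s = 1 := by rcases hs with rfl | rfl <;> norm_num
  have habs : ∀ y : ℤ, |((s * y : ℤ) : ℝ)| = |(y : ℝ)| := by
    intro y; rcases hs with rfl | rfl <;> simp
  set C := ρ ^ 5 / (ρ - X) ^ 2 with hCdef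
  have hc : 0 < ρ - X := by linarith
  have hC : 0 < C := by positivity
  set M : ℝ := (ρ + 1) ^ 2 + (ρ ^ 2 / 3 + 1) ^ 2 with hM
  have hMpos : 0 < M := by positivity
  set ε := δ * C / M with hε
  have hεpos : 0 < ε := by positivity
  have key := comparison (combD ρ) (s * X, 0) (gg ρ X s) C M ε hεpos hC.le ?_ ?_ ?_ ?_
  · obtain ⟨n, hn⟩ := exists_nat_ge (C / ε)
    refine ⟨n, ?_⟩
    have h := key n (0, 0) (by simpa using hMpos.le)
    have hn' : 0 ≤ n * ε - C := by
      rw [div_le_iff₀ hεpos] at hn; linarith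
    rw [min_eq_left hn'] at h
    have hg : gg ρ X s (0, 0) = ρ ^ 3 / 2 := by
      simp only [gg, mul_zero, Int.cast_zero, abs_zero, sub_zero]
      rw [G_neg hX le_rfl]
      simp [hρ.le]
    rw [hg] at h
    have e : ε * M = δ * C := by rw [hε]; field_simp
    have h' : ρ ^ 3 / 2 - δ * C ≤ C * val (combD ρ) (s * X, 0) n (0, 0) := by
      simp at h
      linarith
    have e3 : ρ ^ 3 / 2 = C * (((ρ - X) / ρ) ^ 2 / 2) := by
      rw [hCdef]; field_simp
    rw [e3] at h'
    refine le_of_mul_le_mul_left ?_ hC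
    linarith
  · intro z
    have h1 := G_le hρ hX hXρ (s * z.1)
    have h0 := G_nonneg hρ hX hXρ (s * z.1)
    have h2 : max 0 (1 - 3 / (ρ - |(z.1 : ℝ)|) ^ 2 * |(z.2 : ℝ)|) ≤ 1 := by
      apply max_le zero_le_one
      have : 0 ≤ 3 / (ρ - |(z.1 : ℝ)|) ^ 2 * |(z.2 : ℝ)| := by positivity
      linarith
    exact (mul_le_of_le_one_right h0 h2).trans h1
  · intro z hz
    by_cases h1 : |(z.1 : ℝ)| < ρ
    · have h2 : (ρ - |(z.1 : ℝ)|) ^ 2 / 3 ≤ |(z.2 : ℝ)| := by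
        by_contra hcon
        exact hz ⟨h1, not_le.mp hcon⟩
      have h3 : 0 < ρ - |(z.1 : ℝ)| := by linarith
      have h4 : 1 ≤ 3 / (ρ - |(z.1 : ℝ)|) ^ 2 * |(z.2 : ℝ)| := by
        rw [div_mul_eq_mul_div, le_div_iff₀ (by positivity)]
        linarith
      unfold gg
      rw [max_eq_left (by linarith), mul_zero]
    · have hG : G ρ X (s * z.1) = 0 := by
        have h2 : ρ ≤ |((s * z.1 : ℤ) : ℝ)| := by rw [habs]; linarith
        rcases le_abs.mp h2 with h | h
        · have : X < s * z.1 := by exact_mod_cast lt_of_lt_of_le hXρ h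
          simp [G, this]
        · have h3 : ((s * z.1 : ℤ) : ℝ) ≤ 0 := by linarith
          rw [G_neg hX (by exact_mod_cast h3), max_eq_right (by linarith)]
          norm_num
      simp [gg, hG]
  · rintro z ⟨h1, h2⟩ w hw
    have h2' : |(z.2 : ℝ)| < ρ ^ 2 / 3 := by
      have : (ρ - |(z.1 : ℝ)|) ^ 2 ≤ ρ ^ 2 :=
        pow_le_pow_left₀ (by linarith) (by linarith [abs_nonneg (z.1 : ℝ)]) 2
      linarith
    have a1 : ∀ a : ℤ, |a + 1| ≤ |a| + 1 := fun a => by simpa using abs_add_le a 1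
    have a2 : ∀ a : ℤ, |a - 1| ≤ |a| + 1 := fun a => by simpa using abs_sub a 1
    have hw' : |w.1| ≤ |z.1| + 1 ∧ |w.2| ≤ |z.2| + 1 := by
      unfold nbr at hw
      split_ifs at hw with h0
      · simp only [Finset.mem_insert, Finset.mem_singleton] at hw
        rcases hw with rfl | rfl | rfl | rfl <;> simp [h0, a1, a2]
      · simp only [Finset.mem_insert, Finset.mem_singleton] at hw
        rcases hw with rfl | rfl <;> simp [a1, a2]
    have w1 : |(w.1 : ℝ)| ≤ |(z.1 : ℝ)| + 1 := by exact_mod_cast hw'.1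
    have w2 : |(w.2 : ℝ)| ≤ |(z.2 : ℝ)| + 1 := by exact_mod_cast hw'.2
    rw [hM, ← sq_abs (w.1 : ℝ), ← sq_abs (w.2 : ℝ)]
    gcongr <;> linarith
  · rintro ⟨y, h⟩ ⟨h1, h2⟩ hne
    simp only at h1 h2
    by_cases h0 : h = 0
    · subst h0
      have hne' : s * y ≠ X := by
        intro hcon
        apply hne
        rw [← hcon, ← mul_assoc, hss, one_mul]
      have hG := G_sub hρ hX hXρ (s * y) (by rw [habs]; exact h1) hne'
      rw [habs] at hG
      simp only [nbr, combDeg, if_true]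
      repeat rw [Finset.sum_insert (by simp <;> omega)]
      repeat rw [Finset.sum_insert (by simp <;> omega)]
      simp only [Finset.sum_singleton, gg]
      have hsum : G ρ X (s * (y + 1)) + G ρ X (s * (y - 1)) =
          G ρ X (s * y + 1) + G ρ X (s * y - 1) := by
        rcases hs with rfl | rfl
        · simp
        · rw [add_comm]; congr 2 <;> ring
      have g0 := G_nonneg hρ hX hXρ (s * y)
      have m1 := le_max_right 0 (1 - 3 / (ρ - |(y : ℝ)|) ^ 2)
      have m2 := mul_le_mul_of_nonneg_left m1 g0
      simp only [Int.cast_zero, abs_zero, mul_zero, sub_zero, Int.cast_one, abs_one, mul_one,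
        Int.cast_neg, abs_neg]
      norm_num
      nlinarith
    · simp only [nbr, combDeg, if_neg h0]
      repeat rw [Finset.sum_insert (by simp <;> omega)]
      simp only [Finset.sum_singleton, gg]
      have g0 := G_nonneg hρ hX hXρ (s * y)
      have := mul_le_mul_of_nonneg_left (tooth (3 / (ρ - |(y : ℝ)|) ^ 2) h h0) g0
      push_cast at this ⊢
      linarith

lemma final {ρ : ℝ} (hρ : 0 < ρ) (x : ℤ) (hx : |(x : ℝ)| ≤ ρ)
    {Ω : Type*} [MeasurableSpace Ω] {P : Measure Ω} {S : ℕ → Ω → ℤ × ℤ}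
    (hS : IsCombWalk P S (0, 0)) :
    ENNReal.ofReal (1 / 2 * ((ρ - |(x : ℝ)|) / ρ) ^ 2) ≤
      P {ω | hitTime {((x, (0 : ℤ)) : ℤ × ℤ)} (fun t => S t ω) <
        hitTime (combD ρ)ᶜ (fun t => S t ω)} := by
  rcases hx.lt_or_eq with hx | hx
  swap
  · rw [hx]; simp
  have ha : ((x, 0) : ℤ × ℤ) ∈ combD ρ := by
    refine ⟨hx, ?_⟩
    have : 0 < ρ - |(x : ℝ)| := by linarith
    simp only [Int.cast_zero, abs_zero]
    positivity
  have hv := val_zero_le hS (combD ρ) (x, 0) ha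
  by_cases h0 : x = 0
  · subst h0
    refine le_trans (ENNReal.ofReal_le_ofReal ?_) (hv 0)
    simp [val, hρ.ne']
    norm_num
  obtain ⟨s, X, hs, hX, rfl⟩ : ∃ s X : ℤ, (s = 1 ∨ s = -1) ∧ 0 < X ∧ x = s * X := by
    rcases lt_or_gt_of_ne h0 with h | h
    · exact ⟨-1, -x, Or.inr rfl, by omega, by ring⟩
    · exact ⟨1, x, Or.inl rfl, h, by ring⟩
  have hX' : (0 : ℝ) < X := by exact_mod_cast hX
  have habs : |((s * X : ℤ) : ℝ)| = X := by
    rcases hs with rfl | rfl <;> simp [hX'.le]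
  rw [habs] at hx ⊢
  haveI := hS.1
  rw [ENNReal.ofReal_le_iff_le_toReal (measure_ne_top _ _)]
  refine le_of_forall_pos_le_add fun δ hδ => ?_
  obtain ⟨n, hn⟩ := main_bound hρ hs hX hx δ hδ
  have := (ENNReal.ofReal_le_iff_le_toReal (measure_ne_top _ _)).mp (hv n)
  linarith

end CombAux

/-- **Proposition (hitting a site of the x-axis before exiting `𝒟(ρ)`).**
There is `κ_a > 0`, independent of `ρ`, such that for `|x| ≤ ρ`,
`P₀(H((x,0)) < ℰ(ρ)) ≥ κ_a ((ρ−|x|)/ρ)²`. -/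
theorem comb_hitting_axis :
    ∃ κa : ℝ, 0 < κa ∧
      ∀ ρ : ℝ, 0 < ρ → ∀ x : ℤ, |(x : ℝ)| ≤ ρ →
        ∀ (Ω : Type*) [MeasurableSpace Ω] (P : Measure Ω) (S : ℕ → Ω → ℤ × ℤ),
          IsCombWalk P S (0, 0) →
          ENNReal.ofReal (κa * ((ρ - |(x : ℝ)|) / ρ) ^ 2) ≤
            P {ω | hitTime {((x, (0 : ℤ)) : ℤ × ℤ)} (fun t => S t ω) <
              hitTime (combD ρ)ᶜ (fun t => S t ω)} := by
  refine ⟨1 / 2, by norm_num, ?_⟩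
  intro ρ hρ x hx Ω _ P S hS
  exact CombAux.final hρ x hx hS
end
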